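/- 8·Re Li₄((1+i)/2) − (5/2)·Li₄(1/2) − (log⁴2)/12 + (5 π² log²2)/96 = 343 π⁴ / 11520. (This is the ladder relation B̄₄ − (5/2)Ā₄ = (343/128)·ζ(4).) -/

import Mathlib

open Complex

/-- The polylogarithm `Li n z = ∑_{k ≥ 1} z^k / k^n`. -/
noncomputable def Li (n : ℕ) (z : ℂ) : ℂ := ∑' k : ℕ, z ^ (k + 1) / ((k + 1 : ℕ) : ℂ) ^ n

/-!
The proof compares one-variable functions along pairs of paths: two primitives whose derivatives, or
the real parts of whose derivatives, cancel have a constant sum, and letting the parameter run to the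
ends of its interval turns this into an identity between special values. Besides the polylogarithms
only the double series `S m z = ∑ z^(j+k) / (j k (j+k)^m)` over `S 0 z = log² (1 - z)` is needed. The
functions `Li n`, `n ≥ 2`, and `S m`, `m ≥ 1`, are continuous up to the unit circle, and can be
differentiated along the circle itself, where `log (1 - e^{iθ})` is elementary.

* On `(1/2, 1)` the substitutions `u ↦ 1 - u` and `u ↦ 1 - 1/u` (Euler and Landen) give `Li 2 (1/2)`,
  `Li 3 (1/2)`, `S 2 (1/2) + log 2 * S 1 (1/2)`, and express `S 2 (-1)` by `Li 4 (1/2)`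
  (`S_two_neg_one`).
* The combination `E` of `S` at `z`, `-z` and `z²`, which lies over `artanh² z`, is followed along the
  arc `e^{2it}` and along the segment `I tan t`, both ending at `I`; this expresses `Re S 2 (-I)` by
  `S 2 1` and `S 2 (-1)` (`S_two_I`).
* The segment `(1 + I tan t)/2` from `1/2` to `(1 + I)/2` is compared with the arc `-e^{2it}` from
  `-1` to `-I`, because `log (1 - z)` on the segment and on the arc are, up to sign, both
  `log (2 cos t) + i t`; this expresses `Re Li 4 ((1 + I)/2)` by `Li 4 (1/2)`, `S 2 (-1)`,
  `Re S 2 (-I)` and products of lower weight (`path_relation`).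
* `S 2 1 = ζ(4)/2` by partial fractions (`S_two_one`).

In the resulting linear combination the products with `ζ(3)` cancel.
-/

open Set Filter Topology ComplexConjugate

/-! ### The polylogarithm and the double series -/

/-- The double series `S m z = ∑_{j, k ≥ 1} z^(j+k) / (j k (j+k)^m)`; it satisfies
`S 0 z = log² (1 - z)` and `z (S (m+1))' = S m`, so `S 2` is twice the Nielsen polylogarithm
`S_{2,2}`. -/
noncomputable def S (m : ℕ) (z : ℂ) : ℂ :=
  ∑' p : ℕ × ℕ, z ^ (p.1 + p.2 + 2) /
    (((p.1 + 1 : ℕ) : ℂ) * ((p.2 + 1 : ℕ) : ℂ) * ((p.1 + p.2 + 2 : ℕ) : ℂ) ^ m)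

/-- Termwise differentiation of a generalised power series inside the unit disc. -/
lemma hasDerivAt_series {ι : Type*} (a : ι → ℂ) (N : ι → ℕ) (hN : ∀ i, 1 ≤ N i)
    (hs : ∀ ρ : ℝ, 0 < ρ → ρ < 1 → Summable fun i => ‖a i‖ * ρ ^ N i) {z : ℂ}
    (hz : ‖z‖ < 1) (hz0 : z ≠ 0) :
    HasDerivAt (fun y => ∑' i, a i * y ^ N i / (N i : ℂ)) ((∑' i, a i * z ^ N i) / z) z := by
  obtain ⟨ρ, h1, h2⟩ := exists_between hz
  have hρ : 0 < ρ := lt_of_le_of_lt (norm_nonneg z) h1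
  have hN0 : ∀ i, (N i : ℂ) ≠ 0 := fun i => by
    have := hN i
    exact_mod_cast (by omega : N i ≠ 0)
  have key := hasDerivAt_tsum_of_isPreconnected (𝕜 := ℂ) (F := ℂ)
    (g := fun i y => a i * y ^ N i / (N i : ℂ)) (g' := fun i y => a i * y ^ (N i - 1))
    (u := fun i => (‖a i‖ * ρ ^ N i) * ρ⁻¹) (t := Metric.ball 0 ρ) (y₀ := 0) (y := z)
    ((hs ρ hρ h2).mul_right _) Metric.isOpen_ball (convex_ball 0 ρ).isPreconnected
    (fun i y _ => by
      have := ((hasDerivAt_pow (N i) y).const_mul (a i)).div_const (N i : ℂ)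
      convert! this using 1
      field_simp [hN0 i])
    (fun i y hy => by
      have hy' : ‖y‖ ≤ ρ := by simpa using (Metric.mem_ball.1 hy).le
      have h3 : ρ ^ N i * ρ⁻¹ = ρ ^ (N i - 1) := by
        obtain ⟨n, hn⟩ := Nat.exists_eq_add_of_le' (hN i)
        rw [hn, Nat.add_sub_cancel, pow_succ]; field_simp
      rw [norm_mul, norm_pow, mul_assoc, h3]
      gcongr)
    (by simpa using hρ)
    (by
      convert! (summable_zero : Summable fun _ : ι => (0 : ℂ)) using 2 with i
      have := hN i
      simp [zero_pow (by omega : N i ≠ 0)])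
    (by simpa using h1)
  convert! key using 1
  rw [← tsum_div_const]
  refine tsum_congr fun i => ?_
  obtain ⟨n, hn⟩ := Nat.exists_eq_add_of_le' (hN i)
  rw [hn, Nat.add_sub_cancel, pow_succ]; field_simp

lemma norm_div_natCast_le (c : ℝ) (hc : 0 ≤ c) (m n : ℕ) (hm : 1 ≤ m) :
    c / (m : ℝ) ^ n ≤ c := by
  apply div_le_self hc
  exact one_le_pow₀ (by exact_mod_cast hm)

lemma summable_geom_succ {ρ : ℝ} (h0 : 0 < ρ) (h1 : ρ < 1) : Summable fun k : ℕ => ρ ^ (k + 1) :=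
  (summable_nat_add_iff 1).2 (summable_geometric_of_lt_one h0.le h1)

lemma hasDerivAt_Li (n : ℕ) {z : ℂ} (hz : ‖z‖ < 1) (hz0 : z ≠ 0) :
    HasDerivAt (Li (n + 1)) (Li n z / z) z := by
  have := hasDerivAt_series (fun k : ℕ => 1 / ((k + 1 : ℕ) : ℂ) ^ n) (fun k => k + 1)
    (fun i => by omega) (fun ρ h0 h1 => by
      refine (summable_geom_succ h0 h1).of_nonneg_of_le (fun _ => by positivity) fun k => ?_
      rw [norm_div, norm_one, norm_pow, Complex.norm_natCast, div_mul_eq_mul_div, one_mul]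
      exact norm_div_natCast_le _ (by positivity) _ _ (by omega)) hz hz0
  convert! this using 1
  · funext y
    refine tsum_congr fun k => ?_
    field_simp
    ring
  · congr 1
    refine tsum_congr fun k => ?_
    field_simp

lemma hasDerivAt_S (n : ℕ) {z : ℂ} (hz : ‖z‖ < 1) (hz0 : z ≠ 0) :
    HasDerivAt (S (n + 1)) (S n z / z) z := by
  have := hasDerivAt_series
    (fun p : ℕ × ℕ => 1 / (((p.1 + 1 : ℕ) : ℂ) * ((p.2 + 1 : ℕ) : ℂ) *
      ((p.1 + p.2 + 2 : ℕ) : ℂ) ^ n)) (fun p => p.1 + p.2 + 2)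
    (fun i => by omega) (fun ρ h0 h1 => by
      refine ((summable_geom_succ h0 h1).mul_of_nonneg (summable_geom_succ h0 h1)
        (fun _ => by positivity) (fun _ => by positivity)).of_nonneg_of_le
        (fun _ => by positivity) fun p => ?_
      rw [norm_div, norm_one, norm_mul, norm_mul, norm_pow, Complex.norm_natCast,
        Complex.norm_natCast, Complex.norm_natCast, div_mul_eq_mul_div, one_mul,
        show ρ ^ (p.1 + 1) * ρ ^ (p.2 + 1) = ρ ^ (p.1 + p.2 + 2) by ring]
      apply div_le_self (by positivity)
      have h3 : (1 : ℝ) ≤ ((p.1 + p.2 + 2 : ℕ) : ℝ) ^ n :=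
        one_le_pow₀ (by exact_mod_cast (by omega))
      have h4 : (1 : ℝ) ≤ ((p.1 + 1 : ℕ) : ℝ) := by exact_mod_cast (by omega)
      have h5 : (1 : ℝ) ≤ ((p.2 + 1 : ℕ) : ℝ) := by exact_mod_cast (by omega)
      exact one_le_mul_of_one_le_of_one_le (one_le_mul_of_one_le_of_one_le h4 h5) h3) hz hz0
  convert! this using 1
  · funext y
    refine tsum_congr fun k => ?_
    have : ((k.1 + k.2 + 2 : ℕ) : ℂ) ≠ 0 := by
      exact_mod_cast (by omega : k.1 + k.2 + 2 ≠ 0)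
    field_simp
    ring
  · congr 1
    refine tsum_congr fun k => ?_
    field_simp

lemma Li_one {z : ℂ} (hz : ‖z‖ < 1) : Li 1 z = -log (1 - z) := by
  rw [← (hasSum_taylorSeries_neg_log hz).tsum_eq,
    (hasSum_taylorSeries_neg_log hz).summable.tsum_eq_zero_add]
  simp [Li]

lemma Li_zero {z : ℂ} (hz : ‖z‖ < 1) : Li 0 z = z / (1 - z) := by
  simp only [Li, pow_zero, div_one, pow_succ]
  rw [tsum_mul_right, tsum_geometric_of_norm_lt_one hz]
  ring

lemma S_zero {z : ℂ} (hz : ‖z‖ < 1) : S 0 z = log (1 - z) ^ 2 := by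
  have hs : Summable fun k : ℕ => ‖z ^ (k + 1) / ((k + 1 : ℕ) : ℂ) ^ 1‖ := by
    refine ((summable_nat_add_iff 1).2 (summable_geometric_of_lt_one (norm_nonneg z) hz)).of_nonneg_of_le
      (fun _ => norm_nonneg _) fun k => ?_
    rw [norm_div, norm_pow, norm_pow, Complex.norm_natCast]
    exact norm_div_natCast_le _ (by positivity) _ _ (by omega)
  have h := tsum_mul_tsum_of_summable_norm hs hs
  have h1 : (∑' k : ℕ, z ^ (k + 1) / ((k + 1 : ℕ) : ℂ) ^ 1) = -log (1 - z) := Li_one hz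
  rw [h1] at h
  rw [show log (1 - z) ^ 2 = -log (1 - z) * -log (1 - z) by ring, h]
  refine tsum_congr fun p => ?_
  rw [pow_zero, mul_one, pow_one, pow_one, div_mul_div_comm, ← pow_add]
  congr 2
  ring

lemma summable_S_bound : Summable fun p : ℕ × ℕ =>
    1 / (((p.1 + 1 : ℕ) : ℝ) * ((p.2 + 1 : ℕ) : ℝ) * ((p.1 + p.2 + 2 : ℕ) : ℝ)) := by
  have h : Summable fun k : ℕ => 1 / ((k + 1 : ℕ) : ℝ) ^ (3 / 2 : ℝ) :=
    (summable_nat_add_iff 1).2 (Real.summable_one_div_nat_rpow.2 (by norm_num))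
  refine (h.mul_of_nonneg h (fun _ => by positivity) (fun _ => by positivity)).of_nonneg_of_le
    (fun _ => by positivity) fun p => ?_
  have e : ∀ n : ℕ, ((n + 1 : ℕ) : ℝ) ^ (3 / 2 : ℝ) = ((n + 1 : ℕ) : ℝ) * √((n + 1 : ℕ) : ℝ) := by
    intro n
    rw [show (3 / 2 : ℝ) = 1 + 1 / 2 by norm_num, Real.rpow_add (by positivity), Real.rpow_one,
      Real.sqrt_eq_rpow]
  rw [e, e, div_mul_div_comm, one_mul]
  apply one_div_le_one_div_of_le (by positivity)
  -- the arithmetic-geometric mean inequality bounds `√j √k` by `j + k`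
  have ha := Real.sq_sqrt (show (0 : ℝ) ≤ ((p.1 + 1 : ℕ) : ℝ) by positivity)
  have hb := Real.sq_sqrt (show (0 : ℝ) ≤ ((p.2 + 1 : ℕ) : ℝ) by positivity)
  have hc : √((p.1 + 1 : ℕ) : ℝ) * √((p.2 + 1 : ℕ) : ℝ) ≤ ((p.1 + p.2 + 2 : ℕ) : ℝ) := by
    have : ((p.1 + p.2 + 2 : ℕ) : ℝ) = ((p.1 + 1 : ℕ) : ℝ) + ((p.2 + 1 : ℕ) : ℝ) := by
      push_cast; ring
    rw [this]
    nlinarith [sq_nonneg (√((p.1 + 1 : ℕ) : ℝ) - √((p.2 + 1 : ℕ) : ℝ)),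
      Real.sqrt_nonneg ((p.1 + 1 : ℕ) : ℝ), Real.sqrt_nonneg ((p.2 + 1 : ℕ) : ℝ)]
  calc _ = ((p.1 + 1 : ℕ) : ℝ) * ((p.2 + 1 : ℕ) : ℝ) *
        (√((p.1 + 1 : ℕ) : ℝ) * √((p.2 + 1 : ℕ) : ℝ)) := by ring
    _ ≤ _ := by gcongr

lemma continuousOn_Li (n : ℕ) : ContinuousOn (Li (n + 2)) (Metric.closedBall 0 1) := by
  have h : Summable fun k : ℕ => 1 / ((k + 1 : ℕ) : ℝ) ^ 2 :=
    (summable_nat_add_iff 1).2 (Real.summable_one_div_nat_pow.2 (by norm_num))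
  refine continuousOn_tsum (fun k => by fun_prop) h fun k z hz => ?_
  have hz' : ‖z‖ ≤ 1 := by simpa using hz
  rw [norm_div, norm_pow, norm_pow, Complex.norm_natCast]
  have h4 : (1 : ℝ) ≤ ((k + 1 : ℕ) : ℝ) := by exact_mod_cast (by omega)
  apply div_le_div₀ zero_le_one (pow_le_one₀ (norm_nonneg _) hz') (by positivity)
  exact pow_le_pow_right₀ h4 (by omega)

lemma S_term_le (m : ℕ) (p : ℕ × ℕ) {z : ℂ} (hz : ‖z‖ ≤ 1) :
    ‖z ^ (p.1 + p.2 + 2) /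
    (((p.1 + 1 : ℕ) : ℂ) * ((p.2 + 1 : ℕ) : ℂ) * ((p.1 + p.2 + 2 : ℕ) : ℂ) ^ (m + 1))‖ ≤
    ‖z‖ * (1 / (((p.1 + 1 : ℕ) : ℝ) * ((p.2 + 1 : ℕ) : ℝ) * ((p.1 + p.2 + 2 : ℕ) : ℝ))) := by
  rw [norm_div, norm_mul, norm_mul, norm_pow, norm_pow, Complex.norm_natCast,
    Complex.norm_natCast, Complex.norm_natCast, ← mul_div_assoc, mul_one]
  have h4 : (1 : ℝ) ≤ ((p.1 + p.2 + 2 : ℕ) : ℝ) := by exact_mod_cast (by omega)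
  apply div_le_div₀ (norm_nonneg _) (pow_le_of_le_one (norm_nonneg _) hz (by omega)) (by positivity)
  gcongr
  exact le_self_pow₀ h4 (by omega)

lemma continuousOn_S (m : ℕ) : ContinuousOn (S (m + 1)) (Metric.closedBall 0 1) := by
  refine continuousOn_tsum (fun k => by fun_prop) summable_S_bound fun p z hz => ?_
  have hz' : ‖z‖ ≤ 1 := by simpa using hz
  refine (S_term_le m p hz').trans (mul_le_of_le_one_left (by positivity) hz')

lemma exists_norm_S_le (m : ℕ) : ∃ C : ℝ, ∀ z : ℂ, ‖z‖ ≤ 1 → ‖S (m + 1) z‖ ≤ C * ‖z‖ := by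
  refine ⟨∑' p : ℕ × ℕ,
    1 / (((p.1 + 1 : ℕ) : ℝ) * ((p.2 + 1 : ℕ) : ℝ) * ((p.1 + p.2 + 2 : ℕ) : ℝ)), fun z hz => ?_⟩
  rw [mul_comm]
  exact tsum_of_norm_bounded (summable_S_bound.hasSum.mul_left ‖z‖) fun p => S_term_le m p hz

lemma Li_conj (n : ℕ) (z : ℂ) : Li n (conj z) = conj (Li n z) := by
  simp [Li, conj_tsum]

lemma S_conj (n : ℕ) (z : ℂ) : S n (conj z) = conj (S n z) := by
  rw [S, S, conj_tsum]
  refine tsum_congr fun p => ?_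
  simp only [map_div₀, map_mul, map_pow, Complex.conj_natCast]

lemma Li_at_zero (n : ℕ) : Li n 0 = 0 := by simp [Li]

lemma S_at_zero (n : ℕ) : S n 0 = 0 := by simp [S]

/-! ### Values at `1` and duplication -/

lemma summable_inv_sq : Summable fun k : ℕ => ‖1 / ((k + 1 : ℕ) : ℂ) ^ 2‖ := by
  have h : Summable fun k : ℕ => 1 / ((k + 1 : ℕ) : ℝ) ^ 2 :=
    (summable_nat_add_iff 1).2 (Real.summable_one_div_nat_pow.2 (by norm_num))
  refine h.congr fun k => ?_
  rw [norm_div, norm_one, norm_pow, Complex.norm_natCast]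

lemma Li_two_one : Li 2 1 = (Real.pi : ℂ) ^ 2 / 6 := by
  have h := hasSum_zeta_two
  rw [← hasSum_nat_add_iff' 1] at h
  have h2 := (Complex.hasSum_ofReal.2 h).tsum_eq
  simp only [Li, one_pow]
  simpa using h2

lemma Li_four_one : Li 4 1 = (Real.pi : ℂ) ^ 4 / 90 := by
  have h := hasSum_zeta_four
  rw [← hasSum_nat_add_iff' 1] at h
  have h2 := (Complex.hasSum_ofReal.2 h).tsum_eq
  simp only [Li, one_pow]
  simpa using h2

lemma summable_Li (n : ℕ) {z : ℂ} (hz : ‖z‖ ≤ 1) :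
    Summable fun k : ℕ => z ^ (k + 1) / ((k + 1 : ℕ) : ℂ) ^ (n + 2) := by
  refine Summable.of_norm_bounded summable_inv_sq fun k => ?_
  rw [norm_div, norm_pow, norm_pow, Complex.norm_natCast, norm_div, norm_one, norm_pow,
    Complex.norm_natCast]
  have h4 : (1 : ℝ) ≤ ((k + 1 : ℕ) : ℝ) := by exact_mod_cast (by omega)
  apply div_le_div₀ zero_le_one (pow_le_one₀ (norm_nonneg _) hz) (by positivity)
  exact pow_le_pow_right₀ h4 (by omega)

lemma Li_three_dup {z : ℂ} (hz : ‖z‖ ≤ 1) : Li 3 z + Li 3 (-z) = Li 3 (z ^ 2) / 4 := by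
  have h1 := summable_Li 1 hz
  have h2 := summable_Li 1 (z := -z) (by simpa using hz)
  have h := h1.add h2
  have hz2 : ‖z ^ 2‖ ≤ 1 := by rw [norm_pow]; exact pow_le_one₀ (norm_nonneg _) hz
  have he : ∀ k : ℕ, z ^ (2 * k + 1) / ((2 * k + 1 : ℕ) : ℂ) ^ 3 +
      (-z) ^ (2 * k + 1) / ((2 * k + 1 : ℕ) : ℂ) ^ 3 = 0 := fun k => by
    rw [Odd.neg_pow ⟨k, rfl⟩]; ring
  have ho : ∀ k : ℕ, z ^ (2 * k + 1 + 1) / ((2 * k + 1 + 1 : ℕ) : ℂ) ^ 3 +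
      (-z) ^ (2 * k + 1 + 1) / ((2 * k + 1 + 1 : ℕ) : ℂ) ^ 3 =
      (z ^ 2) ^ (k + 1) / ((k + 1 : ℕ) : ℂ) ^ 3 / 4 := fun k => by
    rw [Even.neg_pow ⟨k + 1, by ring⟩, ← pow_mul, show 2 * (k + 1) = 2 * k + 1 + 1 by ring]
    have : ((k : ℂ) + 1) ≠ 0 := by exact_mod_cast Nat.succ_ne_zero k
    push_cast
    rw [show (2 * (k : ℂ) + 1 + 1) = 2 * (k + 1) by ring]
    field_simp
    ring
  rw [Li, Li, ← h1.tsum_add h2, ← tsum_even_add_odd]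
  · rw [tsum_congr he, tsum_congr ho, tsum_zero, zero_add, tsum_div_const]
    rfl
  · exact summable_zero.congr fun k => (he k).symm
  · exact ((summable_Li 1 hz2).div_const 4).congr fun k => (ho k).symm

lemma Li_three_neg_one : Li 3 (-1) = -(3 / 4) * Li 3 1 := by
  have h := Li_three_dup (z := 1) (by simp)
  rw [one_pow] at h
  linear_combination h

lemma Li_three_neg_I_re : (Li 3 (-I)).re = -(3 / 32) * (Li 3 1).re := by
  have h := Li_three_dup (z := I) (by simp)
  have hc := Li_conj 3 I
  rw [conj_I] at hc
  rw [I_sq, Li_three_neg_one] at h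
  have h1 := congrArg re h
  have h2 := congrArg re hc
  simp at h1 h2
  rw [h2] at h1
  rw [h2]
  linarith

/-- `∑_{j,k} 1 / (j k (j+k)²) = ζ(4) / 2`, from the partial fraction identity
`1/(j²k²) = 1/(j²(j+k)²) + 1/(k²(j+k)²) + 2/(jk(j+k)²)` and the splitting of `ζ(2)²` into its
diagonal and its two off-diagonal halves. -/
lemma S_two_one : S 2 1 = (Real.pi : ℂ) ^ 4 / 180 := by
  set f : ℕ × ℕ → ℂ := fun p => 1 / ((p.1 + 1 : ℕ) : ℂ) ^ 2 * (1 / ((p.2 + 1 : ℕ) : ℂ) ^ 2) with hf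
  set g : ℕ × ℕ → ℂ := fun p =>
    1 / (((p.1 + 1 : ℕ) : ℂ) ^ 2 * ((p.1 + p.2 + 2 : ℕ) : ℂ) ^ 2) with hg
  set t : ℕ × ℕ → ℂ := fun p =>
    1 ^ (p.1 + p.2 + 2) / (((p.1 + 1 : ℕ) : ℂ) * ((p.2 + 1 : ℕ) : ℂ) *
      ((p.1 + p.2 + 2 : ℕ) : ℂ) ^ 2) with ht
  have hfs : Summable f :=
    summable_mul_of_summable_norm (f := fun k : ℕ => 1 / ((k + 1 : ℕ) : ℂ) ^ 2)
      (g := fun k : ℕ => 1 / ((k + 1 : ℕ) : ℂ) ^ 2) summable_inv_sq summable_inv_sq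
  have hts : Summable t := by
    refine Summable.of_norm_bounded summable_S_bound fun p => ?_
    have h := S_term_le 1 p (z := 1) (by rw [norm_one])
    rwa [norm_one, one_mul] at h
  let φ : ℕ × ℕ → ℕ × ℕ := fun p => (p.1, p.1 + p.2 + 1)
  have hφ : Function.Injective φ := by
    rintro ⟨a, b⟩ ⟨c, d⟩ h
    simp only [φ, Prod.mk.injEq] at h ⊢
    omega
  let φ' : ℕ × ℕ → ℕ × ℕ := fun p => (p.1 + p.2 + 1, p.1)
  have hφ' : Function.Injective φ' := by
    rintro ⟨a, b⟩ ⟨c, d⟩ h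
    simp only [φ', Prod.mk.injEq] at h ⊢
    omega
  let δ : ℕ → ℕ × ℕ := fun k => (k, k)
  have hδ : Function.Injective δ := fun a b h => by simpa [δ] using h
  have hgf : ∀ p, f (φ p) = g p := fun p => by
    simp only [hf, hg, φ, one_div_mul_one_div]
  have hgf' : ∀ p, f (φ' p) = g p := fun p => by
    simp only [hf, hg, φ', one_div_mul_one_div]
    rw [mul_comm]
  have hgs : Summable g := (hfs.comp_injective hφ).congr fun p => hgf p
  -- the diagonal and the two halves off it
  have e1 : ∑' p, ({p | p.1 < p.2} : Set (ℕ × ℕ)).indicator f p = ∑' p, g p := by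
    rw [← hφ.tsum_eq]
    · refine tsum_congr fun p => ?_
      rw [indicator_of_mem, hgf]
      simp only [φ, mem_ofPred_eq]; omega
    · rintro ⟨a, b⟩ h
      have : a < b := by
        by_contra hh
        exact h (indicator_of_notMem (by simpa using hh) f)
      exact ⟨(a, b - a - 1), by simp only [φ, Prod.mk.injEq, true_and]; omega⟩
  have e2 : ∑' p, ({p | p.2 < p.1} : Set (ℕ × ℕ)).indicator f p = ∑' p, g p := by
    rw [← hφ'.tsum_eq]
    · refine tsum_congr fun p => ?_
      rw [indicator_of_mem, hgf']
      simp only [φ', mem_ofPred_eq]; omega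
    · rintro ⟨a, b⟩ h
      have : b < a := by
        by_contra hh
        exact h (indicator_of_notMem (by simpa using hh) f)
      exact ⟨(b, a - b - 1), by simp only [φ', Prod.mk.injEq, and_true]; omega⟩
  have e3 : ∑' p, ({p | p.1 = p.2} : Set (ℕ × ℕ)).indicator f p = Li 4 1 := by
    rw [← hδ.tsum_eq]
    · refine tsum_congr fun p => ?_
      rw [indicator_of_mem (by simp [δ])]
      simp only [hf, δ, one_div_mul_one_div, one_pow, ← pow_add]
    · rintro ⟨a, b⟩ h
      have : a = b := by
        by_contra hh
        exact h (indicator_of_notMem (by simpa using hh) f)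
      exact ⟨a, by simp [δ, this]⟩
  have hsplit : ∑' p, f p = ∑' p, g p + ∑' p, g p + Li 4 1 := by
    nth_rewrite 1 [← e1]
    rw [← e2, ← e3, ← (hfs.indicator _).tsum_add (hfs.indicator _),
      ← ((hfs.indicator _).add (hfs.indicator _)).tsum_add (hfs.indicator _)]
    refine tsum_congr fun p => ?_
    rcases lt_trichotomy p.1 p.2 with h | h | h
    · simp [indicator, h, h.ne, h.le]
    · simp [indicator, h]
    · simp [indicator, h, h.ne', h.le]
  have hpf : ∀ p, f p = g p + g p.swap + 2 * t p := fun p => by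
    have h1 : ((p.1 : ℂ) + 1) ≠ 0 := by exact_mod_cast Nat.succ_ne_zero p.1
    have h2 : ((p.2 : ℂ) + 1) ≠ 0 := by exact_mod_cast Nat.succ_ne_zero p.2
    have h3 : ((p.1 : ℂ) + p.2 + 2) ≠ 0 := by
      exact_mod_cast (by omega : p.1 + p.2 + 2 ≠ 0)
    simp only [hf, hg, ht, Prod.fst_swap, Prod.snd_swap, one_pow]
    push_cast
    rw [show (p.2 : ℂ) + p.1 + 2 = p.1 + p.2 + 2 by ring]
    field_simp
    ring
  have hgs' : Summable fun p : ℕ × ℕ => g p.swap :=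
    hgs.comp_injective Prod.swap_injective
  have hsw : ∑' p : ℕ × ℕ, g p.swap = ∑' p, g p := (Equiv.prodComm ℕ ℕ).tsum_eq g
  have hsum : ∑' p, f p = ∑' p, g p + ∑' p, g p + 2 * S 2 1 := by
    rw [tsum_congr hpf, (hgs.add hgs').tsum_add (hts.mul_left 2), hgs.tsum_add hgs', hsw,
      tsum_mul_left]
    rfl
  have h4 := Li_four_one
  linear_combination (1 / 2) * (hsplit - hsum) + (1 / 2) * h4

/-! ### Derivatives on the unit circle and constancy -/

/-- If `z f' = g` inside the unit disc, `f` is continuous up to the boundary and `g` is continuous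
at a boundary point, then `f` may be differentiated along the circle at that point. -/
lemma hasDerivAt_circle {f g : ℂ → ℂ} (hf : ContinuousOn f (Metric.closedBall 0 1))
    (hd : ∀ z, ‖z‖ < 1 → z ≠ 0 → HasDerivAt f (g z / z) z) {θ : ℝ → ℝ} {θ' t : ℝ}
    (hθ : HasDerivAt θ θ' t)
    (hg : ContinuousWithinAt g (Metric.closedBall 0 1) (exp (θ t * I))) :
    HasDerivAt (fun t : ℝ => f (exp (θ t * I))) (θ' * (I * g (exp (θ t * I)))) t := by
  have hT : ∀ x : ℝ, Tendsto (fun n : ℝ × ℝ => (n.1 : ℂ) * exp (n.2 * I))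
      (𝓝[Ioo 0 1] 1 ×ˢ 𝓝 x) (𝓝[Metric.closedBall 0 1] (exp (x * I))) := by
    intro x
    refine tendsto_nhdsWithin_iff.2 ⟨?_, ?_⟩
    · have hc : Continuous fun n : ℝ × ℝ => (n.1 : ℂ) * exp (n.2 * I) := by fun_prop
      have := hc.tendsto (1, x)
      rw [nhds_prod_eq] at this
      simp only [ofReal_one, one_mul] at this
      exact this.mono_left (prod_mono nhdsWithin_le_nhds le_rfl)
    · have : ∀ᶠ r : ℝ in 𝓝[Ioo 0 1] 1, r ∈ Ioo (0 : ℝ) 1 := self_mem_nhdsWithin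
      filter_upwards [this.prod_inl (𝓝 x)] with n hn
      simp [norm_exp_ofReal_mul_I, abs_of_pos hn.1, hn.2.le]
  have hT2 : ∀ x : ℝ, Tendsto (fun n : ℝ × ℝ => exp (n.2 * I))
      (𝓝[Ioo 0 1] (1 : ℝ) ×ˢ 𝓝 x) (𝓝[Metric.closedBall 0 1] (exp (x * I))) := by
    intro x
    refine tendsto_nhdsWithin_iff.2 ⟨?_, ?_⟩
    · have hc : Continuous fun y : ℝ => exp (y * I) := by fun_prop
      exact (hc.tendsto x).comp tendsto_snd
    · exact Eventually.of_forall fun n => by simp [norm_exp_ofReal_mul_I]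
  have : NeBot (𝓝[Ioo (0 : ℝ) 1] 1) := right_nhdsWithin_Ioo_neBot one_pos
  have key : HasDerivAt (fun y : ℝ => f (exp (y * I))) (I * g (exp (θ t * I))) (θ t) := by
    refine hasDerivAt_of_tendstoUniformlyOnFilter (𝕜 := ℝ) (l := 𝓝[Ioo (0 : ℝ) 1] 1)
      (f := fun r y => f ((r : ℂ) * exp (y * I)))
      (f' := fun r y => I * g ((r : ℂ) * exp (y * I)))
      (g' := fun y : ℝ => I * g (exp (y * I))) ?_ ?_ ?_
    · rw [Metric.tendstoUniformlyOnFilter_iff]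
      intro ε hε
      have h1 := (hg.tendsto.comp (hT (θ t))).const_mul I
      have h2 := (hg.tendsto.comp (hT2 (θ t))).const_mul I
      have h3 := h2.dist h1
      rw [dist_self] at h3
      exact h3.eventually (gt_mem_nhds hε)
    · have : ∀ᶠ r : ℝ in 𝓝[Ioo 0 1] 1, r ∈ Ioo (0 : ℝ) 1 := self_mem_nhdsWithin
      filter_upwards [this.prod_inl (𝓝 (θ t))] with n hn
      have hn0 : (n.1 : ℂ) ≠ 0 := by exact_mod_cast hn.1.ne'
      have h1 : ‖(n.1 : ℂ) * exp (n.2 * I)‖ < 1 := by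
        simp [norm_exp_ofReal_mul_I, abs_of_pos hn.1, hn.2]
      have h2 : (n.1 : ℂ) * exp (n.2 * I) ≠ 0 := mul_ne_zero hn0 (exp_ne_zero _)
      have h3 : HasDerivAt (fun y : ℝ => (n.1 : ℂ) * exp (y * I))
          ((n.1 : ℂ) * (exp (n.2 * I) * (1 * I))) n.2 :=
        (((hasDerivAt_id' n.2).ofReal_comp.mul_const I).cexp).const_mul _
      have h4 := (hd _ h1 h2).comp n.2 h3
      convert! h4 using 1
      have := exp_ne_zero (n.2 * I)
      field_simp
    · refine Eventually.of_forall fun y => ?_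
      have hy : exp (y * I) ∈ Metric.closedBall (0 : ℂ) 1 := by simp [norm_exp_ofReal_mul_I]
      have h1 : Tendsto (fun r : ℝ => (r, y)) (𝓝[Ioo 0 1] 1) (𝓝[Ioo 0 1] 1 ×ˢ 𝓝 y) :=
        tendsto_id.prodMk tendsto_const_nhds
      exact (hf _ hy).tendsto.comp ((hT y).comp h1)
  have := key.scomp t hθ
  simpa [Function.comp_def] using this

/-- A function with vanishing derivative has equal limits at the two ends of an interval; it need not
be continuous there. -/
lemma eq_of_hasDerivAt_zero {F : ℝ → ℂ} {a b : ℝ} (hab : a < b) {A B : ℂ}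
    (hd : ∀ x ∈ Ioo a b, HasDerivAt F 0 x) (ha : Tendsto F (𝓝[>] a) (𝓝 A))
    (hb : Tendsto F (𝓝[<] b) (𝓝 B)) : A = B := by
  obtain ⟨c, hc⟩ := isOpen_Ioo.exists_is_const_of_deriv_eq_zero isPreconnected_Ioo
    (fun x hx => (hd x hx).differentiableAt.differentiableWithinAt) (fun x hx => (hd x hx).deriv)
  have h1 : Tendsto F (𝓝[>] a) (𝓝 c) := by
    refine tendsto_const_nhds.congr' ?_
    filter_upwards [Ioo_mem_nhdsGT hab] with x hx using (hc x hx).symm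
  have h2 : Tendsto F (𝓝[<] b) (𝓝 c) := by
    refine tendsto_const_nhds.congr' ?_
    filter_upwards [Ioo_mem_nhdsLT hab] with x hx using (hc x hx).symm
  rw [tendsto_nhds_unique ha h1, tendsto_nhds_unique hb h2]

lemma re_eq_of_hasDerivAt {F F' : ℝ → ℂ} {a b : ℝ} (hab : a < b) {A B : ℂ}
    (hd : ∀ x ∈ Ioo a b, HasDerivAt F (F' x) x) (h0 : ∀ x ∈ Ioo a b, (F' x).re = 0)
    (ha : Tendsto F (𝓝[>] a) (𝓝 A)) (hb : Tendsto F (𝓝[<] b) (𝓝 B)) : A.re = B.re := by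
  have h := eq_of_hasDerivAt_zero (F := fun x => ((F x).re : ℂ)) (A := (A.re : ℂ))
    (B := (B.re : ℂ)) hab (fun x hx => by
      have h1 := (reCLM.hasFDerivAt.comp_hasDerivAt x (hd x hx)).ofReal_comp
      simpa [Function.comp_def, h0 x hx] using h1)
    ((continuous_ofReal.comp continuous_re).continuousAt.tendsto.comp ha)
    ((continuous_ofReal.comp continuous_re).continuousAt.tendsto.comp hb)
  exact_mod_cast h

lemma log_one_sub_exp {θ : ℝ} (h0 : 0 < θ) (h1 : θ < 2 * Real.pi) :
    log (1 - exp (θ * I)) = Real.log (2 * Real.sin (θ / 2)) + ((θ - Real.pi) / 2 : ℝ) * I := by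
  have hs : 0 < 2 * Real.sin (θ / 2) :=
    mul_pos two_pos (Real.sin_pos_of_pos_of_lt_pi (by linarith) (by linarith))
  have he : 1 - exp (θ * I) = (2 * Real.sin (θ / 2) : ℝ) * exp (((θ - Real.pi) / 2 : ℝ) * I) := by
    have e1 : (θ - Real.pi) / 2 = θ / 2 - Real.pi / 2 := by ring
    have e2 : θ = 2 * (θ / 2) := by ring
    rw [e1, exp_mul_I ((θ / 2 - Real.pi / 2 : ℝ) : ℂ), ← ofReal_cos, ← ofReal_sin,
      Real.cos_sub_pi_div_two,
      Real.sin_sub_pi_div_two]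
    nth_rewrite 1 [e2]
    rw [exp_mul_I, ← ofReal_cos, ← ofReal_sin, Real.cos_two_mul', Real.sin_two_mul]
    have h : (Real.sin (θ / 2) : ℂ) ^ 2 + (Real.cos (θ / 2) : ℂ) ^ 2 = 1 := by
      exact_mod_cast Real.sin_sq_add_cos_sq (θ / 2)
    generalize Real.sin (θ / 2) = s at h
    generalize Real.cos (θ / 2) = c at h
    push_cast
    linear_combination -h
  have hpi := Real.pi_pos
  rw [he, log_ofReal_mul hs (exp_ne_zero _), log_exp]
  · simp; linarith
  · simp; linarith

lemma one_sub_exp_mem_slitPlane {θ : ℝ} (h0 : 0 < θ) (h1 : θ < 2 * Real.pi) :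
    1 - exp (θ * I) ∈ slitPlane := by
  left
  have : Real.cos θ < 1 := by
    have e : θ = 2 * (θ / 2) := by ring
    have hs : 0 < Real.sin (θ / 2) :=
      Real.sin_pos_of_pos_of_lt_pi (by linarith) (by linarith)
    rw [e, Real.cos_two_mul']
    nlinarith [Real.sin_sq_add_cos_sq (θ / 2)]
  simpa [exp_ofReal_mul_I_re] using this

lemma exp_mem (x : ℝ) : exp (x * I) ∈ Metric.closedBall (0 : ℂ) 1 := by
  simp [norm_exp_ofReal_mul_I]

section circle

variable {θ : ℝ → ℝ} {θ' t : ℝ}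

lemma hasDerivAt_S_two_circle (hθ : HasDerivAt θ θ' t) :
    HasDerivAt (fun t : ℝ => S 2 (exp (θ t * I))) (θ' * (I * S 1 (exp (θ t * I)))) t :=
  hasDerivAt_circle (continuousOn_S 1) (fun _ hz h0 => hasDerivAt_S 1 hz h0) hθ
    (continuousOn_S 0 _ (exp_mem _))

lemma hasDerivAt_Li_three_circle (hθ : HasDerivAt θ θ' t) :
    HasDerivAt (fun t : ℝ => Li 3 (exp (θ t * I))) (θ' * (I * Li 2 (exp (θ t * I)))) t :=
  hasDerivAt_circle (continuousOn_Li 1) (fun _ hz h0 => hasDerivAt_Li 2 hz h0) hθ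
    (continuousOn_Li 0 _ (exp_mem _))

lemma hasDerivAt_S_one_circle (hθ : HasDerivAt θ θ' t) (h0 : 0 < θ t)
    (h1 : θ t < 2 * Real.pi) :
    HasDerivAt (fun t : ℝ => S 1 (exp (θ t * I))) (θ' * (I *
      (Real.log (2 * Real.sin (θ t / 2)) + ((θ t - Real.pi) / 2 : ℝ) * I) ^ 2)) t := by
  rw [← log_one_sub_exp h0 h1]
  refine hasDerivAt_circle (g := fun z => log (1 - z) ^ 2) (continuousOn_S 0) (fun z hz h0 => ?_)
    hθ ?_
  · rw [← S_zero hz]; exact hasDerivAt_S 0 hz h0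
  · refine ContinuousAt.continuousWithinAt ?_
    have h2 : ContinuousAt (fun z : ℂ => 1 - z) (exp (θ t * I)) := by fun_prop
    exact (h2.clog (one_sub_exp_mem_slitPlane h0 h1)).pow 2

lemma hasDerivAt_Li_two_circle (hθ : HasDerivAt θ θ' t) (h0 : 0 < θ t)
    (h1 : θ t < 2 * Real.pi) :
    HasDerivAt (fun t : ℝ => Li 2 (exp (θ t * I))) (θ' * (I *
      -(Real.log (2 * Real.sin (θ t / 2)) + ((θ t - Real.pi) / 2 : ℝ) * I))) t := by
  rw [← log_one_sub_exp h0 h1]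
  refine hasDerivAt_circle (g := fun z => -log (1 - z)) (continuousOn_Li 0) (fun z hz h0 => ?_)
    hθ ?_
  · rw [← Li_one hz]; exact hasDerivAt_Li 1 hz h0
  · refine ContinuousAt.continuousWithinAt ?_
    have h2 : ContinuousAt (fun z : ℂ => 1 - z) (exp (θ t * I)) := by fun_prop
    exact (h2.clog (one_sub_exp_mem_slitPlane h0 h1)).neg

end circle

/-! ### Polylogarithms at `1/2` -/

lemma eq_of_hasDerivAt_zero' {F : ℝ → ℂ} {a b : ℝ} (hab : a < b) {B : ℂ}
    (hd : ∀ x ∈ Ico a b, HasDerivAt F 0 x) (hb : Tendsto F (𝓝[<] b) (𝓝 B)) : F a = B :=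
  eq_of_hasDerivAt_zero hab (fun x hx => hd x (Ioo_subset_Ico_self hx))
    ((hd a (left_mem_Ico.2 hab)).continuousAt.tendsto.mono_left nhdsWithin_le_nhds) hb

lemma tendsto_of_continuousOn {f : ℂ → ℂ} (hf : ContinuousOn f (Metric.closedBall 0 1))
    {g : ℝ → ℂ} {l : Filter ℝ} {c : ℂ} (hg : Tendsto g l (𝓝 c)) (hc : ‖c‖ ≤ 1)
    (he : ∀ᶠ x in l, ‖g x‖ ≤ 1) : Tendsto (fun x => f (g x)) l (𝓝 (f c)) :=
  (hf c (by simpa using hc)).tendsto.comp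
    (tendsto_nhdsWithin_iff.2 ⟨hg, he.mono fun x hx => by simpa using hx⟩)

lemma HasDerivAt.Li_comp (n : ℕ) {g : ℝ → ℂ} {g' : ℂ} {t : ℝ} (hg : HasDerivAt g g' t)
    (h1 : ‖g t‖ < 1) (h0 : g t ≠ 0) :
    HasDerivAt (fun t => Li (n + 1) (g t)) (Li n (g t) / g t * g') t :=
  (hasDerivAt_Li n h1 h0).comp t hg

lemma HasDerivAt.S_comp (n : ℕ) {g : ℝ → ℂ} {g' : ℂ} {t : ℝ} (hg : HasDerivAt g g' t)
    (h1 : ‖g t‖ < 1) (h0 : g t ≠ 0) :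
    HasDerivAt (fun t => S (n + 1) (g t)) (S n (g t) / g t * g') t :=
  (hasDerivAt_S n h1 h0).comp t hg

lemma hasDerivAt_log_ofReal {u : ℝ} (hu : u ≠ 0) :
    HasDerivAt (fun u : ℝ => (Real.log u : ℂ)) (1 / (u : ℂ)) u := by
  have := (Real.hasDerivAt_log hu).ofReal_comp
  simpa using this

lemma hasDerivAt_log_one_sub {u : ℝ} (hu : u < 1) :
    HasDerivAt (fun u : ℝ => (Real.log (1 - u) : ℂ)) (-1 / (1 - u : ℂ)) u := by
  have := (((hasDerivAt_id' u).const_sub 1).log (by linarith)).ofReal_comp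
  simpa using this

lemma hasDerivAt_ofReal (u : ℝ) : HasDerivAt (fun u : ℝ => (u : ℂ)) 1 u := by
  simpa using (hasDerivAt_id' u).ofReal_comp

lemma norm_ofReal_lt {u : ℝ} (h0 : 0 < u) (h1 : u < 1) : ‖(u : ℂ)‖ < 1 := by
  simpa [abs_of_pos h0] using h1

lemma norm_one_sub_lt {u : ℝ} (h0 : 0 < u) (h1 : u < 1) : ‖(1 - u : ℂ)‖ < 1 := by
  have := norm_ofReal_lt (u := 1 - u) (by linarith) (by linarith)
  simpa using this

lemma Li_one_ofReal {u : ℝ} (h0 : 0 < u) (h1 : u < 1) : Li 1 (u : ℂ) = -(Real.log (1 - u) : ℂ) := by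
  rw [Li_one (norm_ofReal_lt h0 h1), ofReal_log (by linarith)]; simp

lemma Li_one_one_sub {u : ℝ} (h0 : 0 < u) (h1 : u < 1) : Li 1 (1 - u : ℂ) = -(Real.log u : ℂ) := by
  rw [Li_one (norm_one_sub_lt h0 h1), ofReal_log h0.le]; simp

lemma S_zero_ofReal {u : ℝ} (h0 : 0 < u) (h1 : u < 1) :
    S 0 (u : ℂ) = (Real.log (1 - u) : ℂ) ^ 2 := by
  rw [S_zero (norm_ofReal_lt h0 h1), ofReal_log (by linarith)]; simp

lemma S_zero_one_sub {u : ℝ} (h0 : 0 < u) (h1 : u < 1) :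
    S 0 (1 - u : ℂ) = (Real.log u : ℂ) ^ 2 := by
  rw [S_zero (norm_one_sub_lt h0 h1), ofReal_log h0.le]; simp

lemma tendsto_log_mul_one_sub :
    Tendsto (fun u : ℝ => (Real.log (1 - u) : ℂ) * (1 - u : ℂ)) (𝓝[<] 1) (𝓝 0) := by
  have h1 : Tendsto (fun u : ℝ => 1 - u) (𝓝[<] 1) (𝓝[>] 0) := by
    refine tendsto_nhdsWithin_iff.2 ⟨?_, ?_⟩
    · have : ContinuousAt (fun u : ℝ => 1 - u) 1 := by fun_prop
      have := this.tendsto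
      simp only [sub_self] at this
      exact this.mono_left nhdsWithin_le_nhds
    · filter_upwards [self_mem_nhdsWithin] with u hu
      simpa using hu
  have h2 := tendsto_log_mul_rpow_nhdsGT_zero one_pos
  simp only [Real.rpow_one] at h2
  have h3 := (continuous_ofReal.tendsto 0).comp (h2.comp h1)
  simpa [Function.comp_def] using h3

lemma tendsto_log_mul_log :
    Tendsto (fun u : ℝ => (Real.log u : ℂ) * (Real.log (1 - u) : ℂ)) (𝓝[<] 1) (𝓝 0) := by
  have h := tendsto_log_mul_one_sub.norm.const_mul 2
  rw [norm_zero, mul_zero] at h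
  refine squeeze_zero_norm' ?_ h
  filter_upwards [Ioo_mem_nhdsLT (show (1 / 2 : ℝ) < 1 by norm_num)] with u hu
  have h1 : |Real.log u| ≤ 2 * (1 - u) := by
    have hu0 : 0 < u := by linarith [hu.1]
    rw [abs_of_neg (Real.log_neg hu0 hu.2)]
    have := Real.one_sub_inv_le_log_of_pos hu0
    have h3 : u⁻¹ ≤ 1 + 2 * (1 - u) := by
      rw [inv_le_iff_one_le_mul₀ hu0]
      nlinarith [hu.1, hu.2]
    linarith
  have e : ‖(1 - u : ℂ)‖ = 1 - u := by
    have : (1 - u : ℂ) = ((1 - u : ℝ) : ℂ) := by push_cast; rfl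
    rw [this, norm_real, Real.norm_eq_abs, abs_of_pos (by linarith [hu.2])]
  rw [norm_mul, norm_mul, e, norm_real, norm_real, Real.norm_eq_abs, Real.norm_eq_abs]
  nlinarith [abs_nonneg (Real.log (1 - u))]

lemma tendsto_ofReal_one : Tendsto (fun u : ℝ => (u : ℂ)) (𝓝[<] 1) (𝓝 1) := by
  have := (continuous_ofReal.tendsto 1).mono_left (nhdsWithin_le_nhds (s := Iio (1 : ℝ)))
  simpa using this

lemma tendsto_one_sub_ofReal : Tendsto (fun u : ℝ => (1 - u : ℂ)) (𝓝[<] 1) (𝓝 0) := by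
  simpa using tendsto_ofReal_one.const_sub 1

lemma tendsto_log_one : Tendsto (fun u : ℝ => (Real.log u : ℂ)) (𝓝[<] 1) (𝓝 0) := by
  have h : ContinuousAt (fun u : ℝ => (Real.log u : ℂ)) 1 :=
    (hasDerivAt_log_ofReal one_ne_zero).continuousAt
  simpa using h.tendsto.mono_left (nhdsWithin_le_nhds (s := Iio (1 : ℝ)))

lemma eventually_Ioo_one {a : ℝ} (ha : a < 1) : ∀ᶠ u : ℝ in 𝓝[<] 1, u ∈ Ioo a 1 :=
  Ioo_mem_nhdsLT ha

section limits

variable {f : ℂ → ℂ}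

lemma tendsto_at_one (hf : ContinuousOn f (Metric.closedBall 0 1)) :
    Tendsto (fun u : ℝ => f u) (𝓝[<] 1) (𝓝 (f 1)) :=
  tendsto_of_continuousOn hf tendsto_ofReal_one (by simp) <| by
    filter_upwards [eventually_Ioo_one zero_lt_one] with u hu
    exact (norm_ofReal_lt hu.1 hu.2).le

lemma tendsto_one_sub_at_one (hf : ContinuousOn f (Metric.closedBall 0 1)) :
    Tendsto (fun u : ℝ => f (1 - u)) (𝓝[<] 1) (𝓝 (f 0)) :=
  tendsto_of_continuousOn hf tendsto_one_sub_ofReal (by simp) <| by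
    filter_upwards [eventually_Ioo_one zero_lt_one] with u hu
    exact (norm_one_sub_lt hu.1 hu.2).le

end limits

lemma log_half : Real.log (1 / 2) = -Real.log 2 := by
  rw [one_div, Real.log_inv]

lemma log_one_sub_half : Real.log (1 - 1 / 2) = -Real.log 2 := by
  rw [← log_half]; norm_num

/-- Euler's reflection formula for the dilogarithm. -/
lemma Li_two_reflection {u : ℝ} (h0 : 0 < u) (h1 : u < 1) :
    Li 2 u + Li 2 (1 - u) + Real.log u * Real.log (1 - u) = (Real.pi : ℂ) ^ 2 / 6 := by
  refine eq_of_hasDerivAt_zero'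
    (F := fun u : ℝ => Li 2 u + Li 2 (1 - u) + Real.log u * Real.log (1 - u)) h1
    (fun x hx => ?_) ?_
  · have hx0 : 0 < x := h0.trans_le hx.1
    have hxc : (x : ℂ) ≠ 0 := by exact_mod_cast hx0.ne'
    have hxc' : (1 - x : ℂ) ≠ 0 := by exact_mod_cast (sub_pos.2 hx.2).ne'
    refine ((((hasDerivAt_ofReal x).Li_comp 1 (norm_ofReal_lt hx0 hx.2) hxc).fun_add
      (((hasDerivAt_ofReal x).const_sub 1).Li_comp 1 (norm_one_sub_lt hx0 hx.2) hxc')).fun_add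
      ((hasDerivAt_log_ofReal hx0.ne').fun_mul (hasDerivAt_log_one_sub hx.2))).congr_deriv ?_
    rw [Li_one_ofReal hx0 hx.2, Li_one_one_sub hx0 hx.2]
    field_simp
    ring
  · have := ((tendsto_at_one (continuousOn_Li 0)).add
      (tendsto_one_sub_at_one (continuousOn_Li 0))).add tendsto_log_mul_log
    simpa [Li_at_zero, Li_two_one] using this

lemma Li_two_half : Li 2 (1 / 2) = (Real.pi : ℂ) ^ 2 / 12 - (Real.log 2 : ℂ) ^ 2 / 2 := by
  have h := Li_two_reflection (u := 1 / 2) (by norm_num) (by norm_num)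
  rw [log_half, log_one_sub_half] at h
  push_cast at h
  rw [show (1 : ℂ) - 1 / 2 = 1 / 2 by norm_num] at h
  linear_combination h / 2

/-- The point `1 - 1/u` of Landen's transformation lies in the unit disc for `1/2 < u < 1`. -/
lemma landen_bounds {u : ℝ} (h0 : 1 / 2 < u) (h1 : u < 1) :
    ‖(1 - 1 / u : ℂ)‖ < 1 ∧ (1 - 1 / u : ℂ) ≠ 0 := by
  have hu : 0 < u := by linarith
  have h2 : 1 < 1 / u := by rw [lt_div_iff₀ hu]; linarith
  have h3 : 1 / u < 2 := by rw [div_lt_iff₀ hu]; linarith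
  have e : (1 - 1 / u : ℂ) = ((1 - 1 / u : ℝ) : ℂ) := by push_cast; rfl
  rw [e]
  refine ⟨?_, by exact_mod_cast (by linarith)⟩
  rw [norm_real, Real.norm_eq_abs, abs_lt]
  constructor <;> linarith

lemma log_inv_ofReal {u : ℝ} (h0 : 0 < u) : log (1 - (1 - 1 / (u : ℂ))) = -(Real.log u : ℂ) := by
  rw [sub_sub_cancel, show (1 / (u : ℂ)) = ((u⁻¹ : ℝ) : ℂ) by simp, ← ofReal_log (by positivity),
    Real.log_inv, ofReal_neg]

lemma hasDerivAt_landen {u : ℝ} (h0 : u ≠ 0) :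
    HasDerivAt (fun u : ℝ => (1 - 1 / u : ℂ)) (1 / (u : ℂ) ^ 2) u := by
  have hc : (u : ℂ) ≠ 0 := by exact_mod_cast h0
  refine (((hasDerivAt_ofReal u).fun_inv hc).const_sub 1).congr_deriv ?_ |>.congr_of_eventuallyEq ?_
  · simp; ring
  · exact Eventually.of_forall fun x => by simp

lemma tendsto_landen : Tendsto (fun u : ℝ => (1 - 1 / u : ℂ)) (𝓝[<] 1) (𝓝 0) := by
  have := (hasDerivAt_landen one_ne_zero).continuousAt.tendsto.mono_left
    (nhdsWithin_le_nhds (s := Iio (1 : ℝ)))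
  simpa using this

lemma tendsto_landen_at_one {f : ℂ → ℂ} (hf : ContinuousOn f (Metric.closedBall 0 1)) :
    Tendsto (fun u : ℝ => f (1 - 1 / u)) (𝓝[<] 1) (𝓝 (f 0)) :=
  tendsto_of_continuousOn hf tendsto_landen (by simp) <| by
    filter_upwards [eventually_Ioo_one one_half_lt_one] with u hu
    exact (landen_bounds hu.1 hu.2).1.le

/-- Landen's formula for the dilogarithm. -/
lemma Li_two_landen {u : ℝ} (h0 : 1 / 2 < u) (h1 : u < 1) :
    Li 2 (1 - 1 / u) + Li 2 (1 - u) + (Real.log u : ℂ) ^ 2 / 2 = 0 := by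
  refine eq_of_hasDerivAt_zero'
    (F := fun u : ℝ => Li 2 (1 - 1 / u) + Li 2 (1 - u) + (Real.log u : ℂ) ^ 2 / 2) h1
    (fun x hx => ?_) ?_
  · have hx2 : 1 / 2 < x := h0.trans_le hx.1
    have hx0 : 0 < x := by linarith
    have hxc : (x : ℂ) ≠ 0 := by exact_mod_cast hx0.ne'
    have hxc' : (1 - x : ℂ) ≠ 0 := by exact_mod_cast (sub_pos.2 hx.2).ne'
    have hb := landen_bounds hx2 hx.2
    refine ((((hasDerivAt_landen hx0.ne').Li_comp 1 hb.1 hb.2).fun_add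
      (((hasDerivAt_ofReal x).const_sub 1).Li_comp 1 (norm_one_sub_lt hx0 hx.2) hxc')).fun_add
      (((hasDerivAt_log_ofReal hx0.ne').fun_pow 2).div_const 2)).congr_deriv ?_
    rw [Li_one_one_sub hx0 hx.2, Li_one hb.1, log_inv_ofReal hx0]
    have e : (1 - 1 / x : ℂ) = -(1 - x) / x := by field_simp; ring
    rw [e]
    field_simp
    ring
  · have := ((tendsto_landen_at_one (continuousOn_Li 0)).add
      (tendsto_one_sub_at_one (continuousOn_Li 0))).add ((tendsto_log_one.pow 2).div_const 2)
    simpa [Li_at_zero] using this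

lemma tendsto_half_of_continuousAt {F : ℝ → ℂ} (h : ContinuousAt F (1 / 2)) :
    Tendsto F (𝓝[>] (1 / 2)) (𝓝 (F (1 / 2))) :=
  h.tendsto.mono_left nhdsWithin_le_nhds

lemma tendsto_landen_at_half {f : ℂ → ℂ} (hf : ContinuousOn f (Metric.closedBall 0 1)) :
    Tendsto (fun u : ℝ => f (1 - 1 / u)) (𝓝[>] (1 / 2)) (𝓝 (f (-1))) := by
  refine tendsto_of_continuousOn hf ?_ (by simp) ?_
  · have := tendsto_half_of_continuousAt (hasDerivAt_landen (one_div_ne_zero two_ne_zero)).continuousAt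
    convert! this using 2
    norm_num
  · filter_upwards [Ioo_mem_nhdsGT (one_half_lt_one (α := ℝ))] with u hu
    exact (landen_bounds hu.1 hu.2).1.le

/-- The three-term (Landen) relation for the trilogarithm, evaluated at `1/2`. -/
lemma Li_three_half : Li 3 (1 / 2) =
    (7 / 8) * Li 3 1 - (Real.pi : ℂ) ^ 2 * Real.log 2 / 12 + (Real.log 2 : ℂ) ^ 3 / 6 := by
  have hA : ∀ x : ℝ, x ∈ Ico (1 / 2 : ℝ) 1 → HasDerivAt (fun u : ℝ => Li 3 u + Li 3 (1 - u)
      - (Real.log u : ℂ) ^ 3 / 6 - (Real.pi : ℂ) ^ 2 / 6 * Real.log u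
      + Real.log u * (Real.log u * Real.log (1 - u)) / 2)
      (Li 2 x / x - Li 2 (1 - x) / (1 - x) - (Real.log x : ℂ) ^ 2 / 2 / x
        - (Real.pi : ℂ) ^ 2 / 6 / x + Real.log x * Real.log (1 - x) / x
        - (Real.log x : ℂ) ^ 2 / 2 / (1 - x)) x := fun x hx => by
    have hx0 : 0 < x := by linarith [hx.1]
    have hxc : (x : ℂ) ≠ 0 := by exact_mod_cast hx0.ne'
    have hxc' : (1 - x : ℂ) ≠ 0 := by exact_mod_cast (sub_pos.2 hx.2).ne'
    have hP := hasDerivAt_log_ofReal hx0.ne'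
    refine ((((((hasDerivAt_ofReal x).Li_comp 2 (norm_ofReal_lt hx0 hx.2) hxc).fun_add
      (((hasDerivAt_ofReal x).const_sub 1).Li_comp 2 (norm_one_sub_lt hx0 hx.2) hxc')).fun_sub
      ((hP.fun_pow 3).div_const 6)).fun_sub (hP.const_mul _)).fun_add
      ((hP.fun_mul (hP.fun_mul (hasDerivAt_log_one_sub hx.2))).div_const 2)).congr_deriv ?_
    push_cast
    field_simp
    ring
  have hhalf := tendsto_half_of_continuousAt
    (hA (1 / 2) ⟨le_rfl, one_half_lt_one⟩).continuousAt
  have h := eq_of_hasDerivAt_zero (one_half_lt_one (α := ℝ)) (fun x hx => ?_)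
    (hhalf.add (tendsto_landen_at_half (continuousOn_Li 1)))
    (((((tendsto_at_one (continuousOn_Li 1)).add
      (tendsto_one_sub_at_one (continuousOn_Li 1))).sub
      ((tendsto_log_one.pow 3).div_const 6)).sub (tendsto_log_one.const_mul _)).add
      ((tendsto_log_one.mul tendsto_log_mul_log).div_const 2) |>.add
      (tendsto_landen_at_one (continuousOn_Li 1)))
  · rw [log_half, log_one_sub_half] at h
    push_cast at h
    rw [show (1 : ℂ) - 1 / 2 = 1 / 2 by norm_num, Li_at_zero, Li_three_neg_one] at h
    linear_combination h / 2
  · have hx0 : 0 < x := by linarith [hx.1]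
    have hxc : (x : ℂ) ≠ 0 := by exact_mod_cast hx0.ne'
    have hxc' : (1 - x : ℂ) ≠ 0 := by exact_mod_cast (sub_pos.2 hx.2).ne'
    have hb := landen_bounds hx.1 hx.2
    refine ((hA x ⟨hx.1.le, hx.2⟩).fun_add
      ((hasDerivAt_landen hx0.ne').Li_comp 2 hb.1 hb.2)).congr_deriv ?_
    have r1 : Li 2 (1 - 1 / x) = -Li 2 (1 - x) - (Real.log x : ℂ) ^ 2 / 2 := by
      linear_combination Li_two_landen hx.1 hx.2
    have r2 : Li 2 x = (Real.pi : ℂ) ^ 2 / 6 - Real.log x * Real.log (1 - x) - Li 2 (1 - x) := by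
      linear_combination Li_two_reflection hx0 hx.2
    have e : (1 - 1 / x : ℂ) = -(1 - x) / x := by field_simp; ring
    rw [r1, r2, e]
    field_simp
    ring

/-! ### The double sum at `1/2` and at `-1` -/

/-- A logarithmic singularity at an end point is killed by the zero of `S` at the origin. -/
lemma tendsto_mul_of_norm_le {l : Filter ℝ} {f g : ℝ → ℂ} {T : ℂ → ℂ}
    (hT : ∃ C : ℝ, ∀ z : ℂ, ‖z‖ ≤ 1 → ‖T z‖ ≤ C * ‖z‖) (hg : ∀ᶠ x in l, ‖g x‖ ≤ 1)
    (h : Tendsto (fun x => f x * g x) l (𝓝 0)) :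
    Tendsto (fun x => f x * T (g x)) l (𝓝 0) := by
  obtain ⟨C, hC⟩ := hT
  have h1 := h.norm.const_mul C
  rw [norm_zero, mul_zero] at h1
  refine squeeze_zero_norm' ?_ h1
  filter_upwards [hg] with x hx
  rw [norm_mul, norm_mul]
  calc ‖f x‖ * ‖T (g x)‖ ≤ ‖f x‖ * (C * ‖g x‖) := by gcongr; exact hC _ hx
    _ = _ := by ring

lemma tendsto_log_mul_S_one_sub :
    Tendsto (fun u : ℝ => (Real.log (1 - u) : ℂ) * S 1 (1 - u)) (𝓝[<] 1) (𝓝 0) := by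
  refine tendsto_mul_of_norm_le (exists_norm_S_le 0) ?_ tendsto_log_mul_one_sub
  filter_upwards [eventually_Ioo_one zero_lt_one] with u hu
  exact (norm_one_sub_lt hu.1 hu.2).le

lemma tendsto_log_mul_S_landen :
    Tendsto (fun u : ℝ => ((Real.log (1 - u) : ℂ) - Real.log u) * S 1 (1 - 1 / u))
      (𝓝[<] 1) (𝓝 0) := by
  refine tendsto_mul_of_norm_le (exists_norm_S_le 0) ?_ ?_
  · filter_upwards [eventually_Ioo_one one_half_lt_one] with u hu
    exact (landen_bounds hu.1 hu.2).1.le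
  · have hi : Tendsto (fun u : ℝ => -((1 : ℂ) / u)) (𝓝[<] 1) (𝓝 (-(1 / 1))) :=
      (tendsto_const_nhds.div tendsto_ofReal_one one_ne_zero).neg
    have := (tendsto_log_mul_one_sub.mul hi).sub (tendsto_log_one.mul tendsto_landen)
    simp only [zero_mul, sub_zero] at this
    refine this.congr' ?_
    filter_upwards [eventually_Ioo_one zero_lt_one] with u hu
    have hc : (u : ℂ) ≠ 0 := by exact_mod_cast hu.1.ne'
    field_simp
    ring

/-- The reflection formula for `S 2 u - log u * S 1 u`, evaluated at `1/2`. -/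
lemma S_two_half :
    S 2 (1 / 2) + Real.log 2 * S 1 (1 / 2) = S 2 1 / 2 - (Real.log 2 : ℂ) ^ 4 / 4 := by
  have h := eq_of_hasDerivAt_zero' (F := fun u : ℝ => S 2 u - Real.log u * S 1 u
      + (S 2 (1 - u) - Real.log (1 - u) * S 1 (1 - u))
      + (Real.log u * Real.log (1 - u)) ^ 2 / 2) (one_half_lt_one (α := ℝ))
    (fun x hx => ?_)
    ((((tendsto_at_one (continuousOn_S 1)).sub (tendsto_log_one.mul
      (tendsto_at_one (continuousOn_S 0)))).add
      ((tendsto_one_sub_at_one (continuousOn_S 1)).sub tendsto_log_mul_S_one_sub)).add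
      ((tendsto_log_mul_log.pow 2).div_const 2))
  · rw [log_half, log_one_sub_half] at h
    push_cast at h
    rw [show (1 : ℂ) - 1 / 2 = 1 / 2 by norm_num, S_at_zero] at h
    linear_combination h / 2
  · have hx0 : 0 < x := by linarith [hx.1]
    have hxc : (x : ℂ) ≠ 0 := by exact_mod_cast hx0.ne'
    have hxc' : (1 - x : ℂ) ≠ 0 := by exact_mod_cast (sub_pos.2 hx.2).ne'
    have hP := hasDerivAt_log_ofReal hx0.ne'
    have hQ := hasDerivAt_log_one_sub hx.2
    have hu := hasDerivAt_ofReal x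
    have hv := (hasDerivAt_ofReal x).const_sub 1
    have nu := norm_ofReal_lt hx0 hx.2
    have nv := norm_one_sub_lt hx0 hx.2
    refine ((((hu.S_comp 1 nu hxc).fun_sub (hP.fun_mul (hu.S_comp 0 nu hxc))).fun_add
      ((hv.S_comp 1 nv hxc').fun_sub (hQ.fun_mul (hv.S_comp 0 nv hxc')))).fun_add
      (((hP.fun_mul hQ).fun_pow 2).div_const 2)).congr_deriv ?_
    rw [S_zero_ofReal hx0 hx.2, S_zero_one_sub hx0 hx.2]
    push_cast
    field_simp
    ring

/-- The value of the double sum at `-1`, from the substitution `u ↦ 1 - 1/u` on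
`(1/2, 1)`; `hA` differentiates the part of the primitive
involving only values at `u`. -/
lemma S_two_neg_one : S 2 (-1) = 4 * Li 4 (1 / 2) + 4 * Real.log 2 * Li 3 (1 / 2)
    + 2 * (Real.log 2 : ℂ) ^ 2 * Li 2 (1 / 2) + (Real.log 2 : ℂ) ^ 4 / 2 + S 2 1 / 2
    - 4 * Li 4 1 := by
  have hA : ∀ x : ℝ, x ∈ Ico (1 / 2 : ℝ) 1 → HasDerivAt (fun u : ℝ => -4 * Li 4 u
      + 4 * (Real.log u * Li 3 u) - 2 * ((Real.log u : ℂ) ^ 2 * Li 2 u)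
      - (Real.log u : ℂ) ^ 2 * (Real.log u * Real.log (1 - u)) + (Real.log u : ℂ) ^ 4 / 4
      + (Real.log u * Real.log (1 - u)) ^ 2 / 2 + S 2 u - Real.log u * S 1 u)
      (-(Real.log (1 - x) - Real.log x) * (Real.log x : ℂ) ^ 2 / (x * (1 - x))) x := fun x hx => by
    have hx0 : 0 < x := by linarith [hx.1]
    have hxc : (x : ℂ) ≠ 0 := by exact_mod_cast hx0.ne'
    have hxc' : (1 - x : ℂ) ≠ 0 := by exact_mod_cast (sub_pos.2 hx.2).ne'
    have hP := hasDerivAt_log_ofReal hx0.ne'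
    have hQ := hasDerivAt_log_one_sub hx.2
    have hu := hasDerivAt_ofReal x
    have nu := norm_ofReal_lt hx0 hx.2
    refine ((((((((hu.Li_comp 3 nu hxc).const_mul (-4)).fun_add
      ((hP.fun_mul (hu.Li_comp 2 nu hxc)).const_mul 4)).fun_sub
      (((hP.fun_pow 2).fun_mul (hu.Li_comp 1 nu hxc)).const_mul 2)).fun_sub
      ((hP.fun_pow 2).fun_mul (hP.fun_mul hQ))).fun_add ((hP.fun_pow 4).div_const 4)).fun_add
      (((hP.fun_mul hQ).fun_pow 2).div_const 2)).fun_add (hu.S_comp 1 nu hxc)).fun_sub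
      (hP.fun_mul (hu.S_comp 0 nu hxc)) |>.congr_deriv ?_
    rw [S_zero_ofReal hx0 hx.2, Li_one_ofReal hx0 hx.2]
    push_cast
    field_simp
    ring
  have hhalf := tendsto_half_of_continuousAt
    (hA (1 / 2) ⟨le_rfl, one_half_lt_one⟩).continuousAt
  have hD : ∀ x : ℝ, x ∈ Ico (1 / 2 : ℝ) 1 → HasDerivAt
      (fun u : ℝ => (Real.log (1 - u) : ℂ) - Real.log u) (-1 / (1 - x : ℂ) - 1 / x) x :=
    fun x hx => (hasDerivAt_log_one_sub hx.2).fun_sub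
      (hasDerivAt_log_ofReal (by linarith [hx.1] : (0 : ℝ) < x).ne')
  have hDh := tendsto_half_of_continuousAt
    (hD (1 / 2) ⟨le_rfl, one_half_lt_one⟩).continuousAt
  have L1 := tendsto_log_one
  have h := eq_of_hasDerivAt_zero (one_half_lt_one (α := ℝ)) (fun x hx => ?_)
    (hhalf.add ((tendsto_landen_at_half (continuousOn_S 1)).sub
      (hDh.mul (tendsto_landen_at_half (continuousOn_S 0)))))
    (((((((((tendsto_at_one (continuousOn_Li 2)).const_mul (-4)).add
      ((L1.mul (tendsto_at_one (continuousOn_Li 1))).const_mul 4)).sub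
      (((L1.pow 2).mul (tendsto_at_one (continuousOn_Li 0))).const_mul 2)).sub
      ((L1.pow 2).mul tendsto_log_mul_log)).add ((L1.pow 4).div_const 4)).add
      ((tendsto_log_mul_log.pow 2).div_const 2)).add (tendsto_at_one (continuousOn_S 1))).sub
      (L1.mul (tendsto_at_one (continuousOn_S 0))) |>.add
      ((tendsto_landen_at_one (continuousOn_S 1)).sub tendsto_log_mul_S_landen))
  · rw [log_half, log_one_sub_half] at h
    push_cast at h
    rw [S_at_zero] at h
    linear_combination h - S_two_half
  · have hx0 : 0 < x := by linarith [hx.1]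
    have hxc : (x : ℂ) ≠ 0 := by exact_mod_cast hx0.ne'
    have hxc' : (1 - x : ℂ) ≠ 0 := by exact_mod_cast (sub_pos.2 hx.2).ne'
    have hb := landen_bounds hx.1 hx.2
    have hy := hasDerivAt_landen hx0.ne'
    refine ((hA x ⟨hx.1.le, hx.2⟩).fun_add ((hy.S_comp 1 hb.1 hb.2).fun_sub
      ((hD x ⟨hx.1.le, hx.2⟩).fun_mul (hy.S_comp 0 hb.1 hb.2)))).congr_deriv ?_
    rw [S_zero hb.1, log_inv_ofReal hx0]
    have e : (1 - 1 / x : ℂ) = -(1 - x) / x := by field_simp; ring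
    rw [e]
    field_simp
    ring

/-! ### The even part of the double sum and its value at `I` -/

/-- The combination of `S m z`, `S m (-z)` and `S m (z ^ 2)` lying over
`E 0 z = (log (1 + z) - log (1 - z)) ^ 2 / 4 = artanh(z) ^ 2`. -/
noncomputable def E (m : ℕ) (z : ℂ) : ℂ := (S m z + S m (-z)) / 2 - S m (z ^ 2) / 2 ^ (m + 2)

lemma E_zero {z : ℂ} (hz : ‖z‖ < 1) : E 0 z = (log (1 + z) - log (1 - z)) ^ 2 / 4 := by
  have hz' : ‖-z‖ < 1 := by rwa [norm_neg]
  have hz2 : ‖z ^ 2‖ < 1 := by rw [norm_pow]; exact pow_lt_one₀ (norm_nonneg _) hz two_ne_zero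
  have harg : ∀ w : ℂ, ‖w‖ < 1 → 1 + w ≠ 0 ∧ |arg (1 + w)| < Real.pi / 2 := fun w hw => by
    have hre : 0 < (1 + w).re := by
      have := (abs_lt.1 ((abs_re_le_norm w).trans_lt hw)).1
      simp; linarith
    exact ⟨fun h => by simp [h] at hre, abs_arg_lt_pi_div_two_iff.2 (Or.inl hre)⟩
  have h1 := harg z hz
  have h2 := harg (-z) hz'
  have e : log (1 - z ^ 2) = log (1 + z) + log (1 + -z) := by
    rw [← log_mul h1.1 h2.1, show (1 + z) * (1 + -z) = 1 - z ^ 2 by ring]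
    have a1 := abs_lt.1 h1.2
    have a2 := abs_lt.1 h2.2
    constructor <;> linarith [a1.1, a1.2, a2.1, a2.2]
  rw [E, S_zero hz, S_zero hz', S_zero hz2, e, sub_neg_eq_add, ← sub_eq_add_neg]
  ring

lemma hasDerivAt_E (m : ℕ) {z : ℂ} (hz : ‖z‖ < 1) (hz0 : z ≠ 0) :
    HasDerivAt (E (m + 1)) (E m z / z) z := by
  have hz' : ‖-z‖ < 1 := by rwa [norm_neg]
  have hz2 : ‖z ^ 2‖ < 1 := by rw [norm_pow]; exact pow_lt_one₀ (norm_nonneg _) hz two_ne_zero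
  have h1 := hasDerivAt_S m hz hz0
  have h2 := (hasDerivAt_S m hz' (neg_ne_zero.2 hz0)).comp z (hasDerivAt_id' z).neg
  have h3 := (hasDerivAt_S m hz2 (pow_ne_zero 2 hz0)).comp z ((hasDerivAt_id' z).fun_pow 2)
  refine (((h1.add h2).div_const 2).sub (h3.div_const (2 ^ (m + 1 + 2)))).congr_deriv ?_
  rw [E]
  push_cast
  field_simp
  ring

lemma HasDerivAt.E_comp (m : ℕ) {g : ℝ → ℂ} {g' : ℂ} {t : ℝ} (hg : HasDerivAt g g' t)
    (h1 : ‖g t‖ < 1) (h0 : g t ≠ 0) :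
    HasDerivAt (fun t => E (m + 1) (g t)) (E m (g t) / g t * g') t :=
  (hasDerivAt_E m h1 h0).comp t hg

lemma continuousOn_E (m : ℕ) : ContinuousOn (E (m + 1)) (Metric.closedBall 0 1) := by
  have h := continuousOn_S m
  refine ((h.add (h.comp continuousOn_neg fun z hz => by simpa using hz)).div_const 2).sub
    ((h.comp (continuousOn_pow 2) fun z hz => ?_).div_const _)
  simp only [mem_closedBall_zero_iff, norm_pow] at hz ⊢
  exact pow_le_one₀ (norm_nonneg _) hz

lemma exists_norm_E_le (m : ℕ) : ∃ C : ℝ, ∀ z : ℂ, ‖z‖ ≤ 1 → ‖E (m + 1) z‖ ≤ C * ‖z‖ := by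
  obtain ⟨C, hC⟩ := exists_norm_S_le m
  have hC0 : 0 ≤ C := by
    have := (norm_nonneg _).trans (hC 1 (by simp))
    simpa using this
  refine ⟨2 * C, fun z hz => ?_⟩
  have h1 := hC z hz
  have h2 := hC (-z) (by rwa [norm_neg])
  have h3 := hC (z ^ 2) (by rw [norm_pow]; exact pow_le_one₀ (norm_nonneg _) hz)
  rw [norm_neg] at h2
  have h4 : ‖z ^ 2‖ ≤ ‖z‖ := by
    rw [norm_pow]; exact pow_le_of_le_one (norm_nonneg _) hz two_ne_zero
  have h5 : ‖S (m + 1) (z ^ 2) / 2 ^ (m + 1 + 2)‖ ≤ C * ‖z‖ := by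
    rw [norm_div, norm_pow, norm_ofNat]
    refine (div_le_self (norm_nonneg _) (one_le_pow₀ (by norm_num))).trans (h3.trans ?_)
    gcongr
  have h6 : ‖(S (m + 1) z + S (m + 1) (-z)) / 2‖ ≤ C * ‖z‖ := by
    rw [norm_div, norm_ofNat]
    have := norm_add_le (S (m + 1) z) (S (m + 1) (-z))
    rw [div_le_iff₀ two_pos]
    linarith
  rw [E]
  refine (norm_sub_le _ _).trans ?_
  linarith

lemma E_at_zero (m : ℕ) : E m 0 = 0 := by simp [E, S_at_zero]

lemma E_one_I_im : (E 1 I).im = 0 := by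
  have h := S_conj 1 I
  have h1 := S_conj 1 (-1)
  rw [conj_I] at h
  rw [map_neg, map_one] at h1
  have h2 : (S 1 (-1)).im = 0 := by
    have := congrArg im h1
    rw [conj_im] at this
    linarith
  have h3 : S 1 I + S 1 (-I) = ((2 * (S 1 I).re : ℝ) : ℂ) := by rw [h, add_conj]
  rw [E, I_sq, h3, sub_im]
  have e1 : (((2 * (S 1 I).re : ℝ) : ℂ) / 2).im = 0 := by
    rw [show ((2 * (S 1 I).re : ℝ) : ℂ) / 2 = ((S 1 I).re : ℂ) by push_cast; ring, ofReal_im]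
  have e2 : (S 1 (-1) / 2 ^ (1 + 2)).im = 0 := by
    rw [show S 1 (-1) / 2 ^ (1 + 2) = ((1 / 8 : ℝ) : ℂ) * S 1 (-1) by push_cast; ring, im_ofReal_mul,
      h2, mul_zero]
  rw [e1, e2, sub_zero]

lemma log_one_add_tan {t : ℝ} (h : |t| < Real.pi / 2) :
    log (1 + Real.tan t * I) = -(Real.log (Real.cos t) : ℂ) + t * I := by
  have ht := abs_lt.1 h
  have hc : 0 < Real.cos t := Real.cos_pos_of_mem_Ioo ht
  have hcc : (Real.cos t : ℂ) ≠ 0 := by exact_mod_cast hc.ne'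
  have e : (1 + Real.tan t * I : ℂ) = ((Real.cos t)⁻¹ : ℝ) * exp (t * I) := by
    rw [Real.tan_eq_sin_div_cos, exp_mul_I, ← ofReal_cos, ← ofReal_sin]
    push_cast at hcc ⊢
    field_simp
  have hpi := Real.pi_pos
  rw [e, log_ofReal_mul (inv_pos.2 hc) (exp_ne_zero _), log_exp, Real.log_inv, ofReal_neg]
  · simp; linarith
  · simp; linarith

lemma log_one_sub_tan {t : ℝ} (h : |t| < Real.pi / 2) :
    log (1 - Real.tan t * I) = -(Real.log (Real.cos t) : ℂ) - t * I := by
  have := log_one_add_tan (t := -t) (by rwa [abs_neg])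
  rw [Real.tan_neg, Real.cos_neg] at this
  push_cast at this
  rw [neg_mul, neg_mul, ← sub_eq_add_neg, ← sub_eq_add_neg] at this
  push_cast
  exact this

lemma exp_add_pi (t : ℝ) : exp (((t + Real.pi : ℝ) : ℂ) * I) = -exp (t * I) := by
  push_cast
  rw [add_mul, exp_add, exp_pi_mul_I, mul_neg_one]

lemma log_one_add_exp {t : ℝ} (h0 : -Real.pi / 2 < t) (h1 : t < Real.pi / 2) :
    log (1 + exp ((2 * t : ℝ) * I)) = Real.log (2 * Real.cos t) + t * I := by
  have h := log_one_sub_exp (θ := 2 * t + Real.pi) (by linarith) (by linarith)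
  rw [exp_add_pi, sub_neg_eq_add] at h
  rw [h, show (2 * t + Real.pi) / 2 = t + Real.pi / 2 by ring, Real.sin_add_pi_div_two]
  congr 3
  ring

lemma log_tan {t : ℝ} (h0 : 0 < t) (h1 : t < Real.pi / 2) :
    Real.log (Real.tan t) = Real.log (2 * Real.sin t) - Real.log (2 * Real.cos t) := by
  have hc : 0 < Real.cos t := Real.cos_pos_of_mem_Ioo ⟨by linarith, h1⟩
  have hs : 0 < Real.sin t := Real.sin_pos_of_pos_of_lt_pi h0 (by linarith)
  rw [← Real.log_div (by positivity) (by positivity), Real.tan_eq_sin_div_cos]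
  congr 1
  field_simp

lemma hasDerivAt_E_two_circle (t : ℝ) :
    HasDerivAt (fun t : ℝ => E 2 (exp ((2 * t : ℝ) * I)))
      (2 * (I * E 1 (exp ((2 * t : ℝ) * I)))) t := by
  have := hasDerivAt_circle (t := t) (continuousOn_E 1) (fun _ hz h0 => hasDerivAt_E 1 hz h0)
    (((hasDerivAt_id' t).const_mul 2)) (continuousOn_E 0 _ (exp_mem _))
  simpa using this

lemma hasDerivAt_E_one_circle {t : ℝ} (h0 : 0 < t) (h1 : t < Real.pi / 2) :
    HasDerivAt (fun t : ℝ => E 1 (exp ((2 * t : ℝ) * I)))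
      (2 * (I * ((-(Real.log (Real.tan t) : ℂ) + Real.pi / 2 * I) ^ 2 / 4))) t := by
  have hs := one_sub_exp_mem_slitPlane (θ := 2 * t) (by linarith) (by linarith)
  have hs' := one_sub_exp_mem_slitPlane (θ := 2 * t + Real.pi) (by linarith) (by linarith)
  rw [exp_add_pi, sub_neg_eq_add] at hs'
  have hg : ContinuousAt (fun z : ℂ => (log (1 + z) - log (1 - z)) ^ 2 / 4)
      (exp ((2 * t : ℝ) * I)) := by
    have a1 : ContinuousAt (fun z : ℂ => 1 - z) (exp ((2 * t : ℝ) * I)) := by fun_prop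
    have a2 : ContinuousAt (fun z : ℂ => 1 + z) (exp ((2 * t : ℝ) * I)) := by fun_prop
    exact (((a2.clog hs').sub (a1.clog hs)).pow 2).div_const 4
  have := hasDerivAt_circle (t := t) (θ := fun t => 2 * t) (continuousOn_E 0)
    (fun z hz h0 => by
      have := hasDerivAt_E 0 hz h0
      rwa [E_zero hz] at this)
    ((hasDerivAt_id' t).const_mul 2) hg.continuousWithinAt
  refine this.congr_deriv ?_
  rw [log_one_add_exp (by linarith) h1, log_one_sub_exp (by linarith) (by linarith),
    log_tan h0 h1, show 2 * t / 2 = t by ring]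
  push_cast
  ring

lemma tan_bounds {t : ℝ} (h0 : 0 < t) (h1 : t < Real.pi / 4) :
    0 < Real.tan t ∧ Real.tan t < 1 := by
  have hpi := Real.pi_pos
  refine ⟨Real.tan_pos_of_pos_of_lt_pi_div_two h0 (by linarith), ?_⟩
  rw [← Real.tan_pi_div_four]
  exact Real.tan_lt_tan_of_nonneg_of_lt_pi_div_two h0.le (by linarith) h1

lemma norm_tan_mul_I {t : ℝ} (h0 : 0 < t) (h1 : t < Real.pi / 4) : ‖(Real.tan t * I : ℂ)‖ < 1 := by
  have h := tan_bounds h0 h1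
  rw [norm_mul, norm_I, mul_one, norm_real, Real.norm_eq_abs, abs_of_pos h.1]
  exact h.2

lemma E_zero_tan {t : ℝ} (h0 : 0 < t) (h1 : t < Real.pi / 4) :
    E 0 (Real.tan t * I) = -(t : ℂ) ^ 2 := by
  have ha : |t| < Real.pi / 2 := by rw [abs_of_pos h0]; linarith
  rw [E_zero (norm_tan_mul_I h0 h1), log_one_add_tan ha, log_one_sub_tan ha]
  linear_combination (t : ℂ) ^ 2 * I_sq

lemma tendsto_log_tan_mul_tan :
    Tendsto (fun t : ℝ => (Real.log (Real.tan t) : ℂ) * (Real.tan t * I)) (𝓝[>] 0) (𝓝 0) := by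
  have hpi := Real.pi_pos
  have h : ContinuousAt (fun t : ℝ => ((Real.tan t * Real.log (Real.tan t) : ℝ) : ℂ) * I) 0 := by
    have h1 : ContinuousAt Real.tan 0 := (Real.hasDerivAt_tan (by simp)).continuousAt
    have h2 := Real.continuous_mul_log.continuousAt.comp h1
    exact (continuous_ofReal.continuousAt.comp h2).mul continuousAt_const
  have h2 := h.tendsto.mono_left (nhdsWithin_le_nhds (s := Ioi (0 : ℝ)))
  simp only [Real.tan_zero, zero_mul, ofReal_zero] at h2
  refine h2.congr fun t => ?_
  push_cast
  ring

lemma tendsto_mul_log_tan :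
    Tendsto (fun t : ℝ => (t : ℂ) * Real.log (Real.tan t)) (𝓝[>] 0) (𝓝 0) := by
  have h := tendsto_log_tan_mul_tan.norm
  rw [norm_zero] at h
  refine squeeze_zero_norm' ?_ h
  have hpi := Real.pi_pos
  filter_upwards [Ioo_mem_nhdsGT (show (0 : ℝ) < Real.pi / 4 by linarith)] with t ht
  have := Real.lt_tan ht.1 (by linarith [ht.2])
  simp only [norm_mul, norm_I, mul_one, norm_real, Real.norm_eq_abs]
  rw [mul_comm]
  refine mul_le_mul_of_nonneg_left ?_ (abs_nonneg _)
  rw [abs_of_pos ht.1, abs_of_pos (ht.1.trans this)]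
  exact this.le

/-- The value of `Re (E 2)` at `I`. The functions `E` on the arc `e^{2it}` from `1` to `I` and on the
segment `I tan t` from `0` to `I` are compared: after integration by parts the real parts of their
derivatives cancel, up to that of an elementary function of `t` and `log (tan t)`. -/
lemma E_two_I_re : (E 2 I).re = (E 2 1).re / 2 - Real.pi ^ 4 / 256 := by
  have hpi := Real.pi_pos
  have hab : (0 : ℝ) < Real.pi / 4 := by linarith
  have hcos : ∀ x ∈ Ioc 0 (Real.pi / 4), 0 < Real.cos x := fun x hx =>
    Real.cos_pos_of_mem_Ioo ⟨by linarith [hx.1], by linarith [hx.2]⟩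
  have htan : ∀ x ∈ Ioc 0 (Real.pi / 4), HasDerivAt (fun t : ℝ => (Real.tan t * I : ℂ))
      ((1 / Real.cos x ^ 2 : ℝ) * I) x := fun x hx =>
    ((Real.hasDerivAt_tan (hcos x hx).ne').ofReal_comp).mul_const I
  have htan0 : ∀ x ∈ Ioc 0 (Real.pi / 4), 0 < Real.tan x := fun x hx =>
    Real.tan_pos_of_pos_of_lt_pi_div_two hx.1 (by linarith [hx.2])
  have hlog : ∀ x ∈ Ioc 0 (Real.pi / 4), HasDerivAt (fun t : ℝ => (Real.log (Real.tan t) : ℂ))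
      ((1 / Real.cos x ^ 2 / Real.tan x : ℝ) : ℂ) x := fun x hx =>
    ((Real.hasDerivAt_tan (hcos x hx).ne').log (htan0 x hx).ne').ofReal_comp
  have hmem : Real.pi / 4 ∈ Ioc 0 (Real.pi / 4) := ⟨hab, le_rfl⟩
  have cE : ∀ m x, Tendsto (fun t : ℝ => E (m + 1) (exp ((2 * t : ℝ) * I))) (𝓝 x)
      (𝓝 (E (m + 1) (exp ((2 * x : ℝ) * I)))) := fun m x =>
    tendsto_of_continuousOn (continuousOn_E m)
      ((by fun_prop : Continuous fun t : ℝ => exp ((2 * t : ℝ) * I)).tendsto x)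
      (by simpa using exp_mem (2 * x)) (Eventually.of_forall fun t => by simpa using exp_mem (2 * t))
  have ct : ∀ x : ℝ, Tendsto (fun t : ℝ => (t : ℂ)) (𝓝 x) (𝓝 x) := fun x =>
    continuous_ofReal.tendsto x
  have hE0 : ∀ᶠ t in 𝓝[>] (0 : ℝ), ‖(Real.tan t * I : ℂ)‖ ≤ 1 := by
    filter_upwards [Ioo_mem_nhdsGT hab] with t ht using (norm_tan_mul_I ht.1 ht.2).le
  have hE1 : ∀ᶠ t in 𝓝[<] (Real.pi / 4), ‖(Real.tan t * I : ℂ)‖ ≤ 1 := by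
    filter_upwards [Ioo_mem_nhdsLT hab] with t ht using (norm_tan_mul_I ht.1 ht.2).le
  have hT0 : Tendsto (fun t : ℝ => (Real.tan t * I : ℂ)) (𝓝[>] 0) (𝓝 0) := by
    have h1 : HasDerivAt (fun t : ℝ => (Real.tan t * I : ℂ)) _ 0 :=
      (Real.hasDerivAt_tan (by simp)).ofReal_comp.mul_const I
    have h2 := h1.continuousAt.tendsto.mono_left (nhdsWithin_le_nhds (s := Ioi (0 : ℝ)))
    simpa using h2
  have hT1 : Tendsto (fun t : ℝ => (Real.tan t * I : ℂ)) (𝓝[<] (Real.pi / 4)) (𝓝 I) := by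
    have h2 := (htan _ hmem).continuousAt.tendsto.mono_left
      (nhdsWithin_le_nhds (s := Iio (Real.pi / 4)))
    simpa using h2
  have hL1 : Tendsto (fun t : ℝ => (Real.log (Real.tan t) : ℂ)) (𝓝[<] (Real.pi / 4)) (𝓝 0) := by
    have h2 := (hlog _ hmem).continuousAt.tendsto.mono_left
      (nhdsWithin_le_nhds (s := Iio (Real.pi / 4)))
    simpa using h2
  have h := re_eq_of_hasDerivAt hab
    (F := fun t : ℝ => (2 * I * (t * E 1 (exp ((2 * t : ℝ) * I))) - E 2 (exp ((2 * t : ℝ) * I)))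
      + (((t : ℂ) * Real.log (Real.tan t)) ^ 2 / 2 + Real.log (Real.tan t) * E 1 (Real.tan t * I)
      - E 2 (Real.tan t * I)) - (Real.pi : ℂ) ^ 2 * (t : ℂ) ^ 2 / 8)
    (F' := fun t : ℝ => ((t * Real.log (Real.tan t) * Real.pi : ℝ) : ℂ) * I)
    (fun x hx => ?_) (fun x hx => by rw [re_ofReal_mul, I_re, mul_zero])
    (((((((ct 0).mul (cE 0 0)).const_mul (2 * I)).sub (cE 1 0)).mono_left nhdsWithin_le_nhds).add
      ((((tendsto_mul_log_tan.pow 2).div_const 2).add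
        (tendsto_mul_of_norm_le (exists_norm_E_le 0) hE0 tendsto_log_tan_mul_tan)).sub
        (tendsto_of_continuousOn (continuousOn_E 1) hT0 (by simp) hE0))).sub
      (((((ct 0).pow 2).const_mul _).div_const 8).mono_left nhdsWithin_le_nhds))
    (((((((ct (Real.pi / 4)).mul (cE 0 (Real.pi / 4))).const_mul (2 * I)).sub
      (cE 1 (Real.pi / 4))).mono_left nhdsWithin_le_nhds).add
      (((((((ct (Real.pi / 4)).mono_left nhdsWithin_le_nhds).mul hL1).pow 2).div_const 2).add
        (hL1.mul (tendsto_of_continuousOn (continuousOn_E 0) hT1 (by simp) hE1))).sub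
        (tendsto_of_continuousOn (continuousOn_E 1) hT1 (by simp) hE1))).sub
      (((((ct (Real.pi / 4)).pow 2).const_mul _).div_const 8).mono_left nhdsWithin_le_nhds))
  · have e0 : exp ((2 * 0 : ℝ) * I) = 1 := by simp
    have e1 : exp ((2 * (Real.pi / 4) : ℝ) * I) = I := by
      rw [show 2 * (Real.pi / 4) = Real.pi / 2 by ring]
      push_cast
      exact exp_pi_div_two_mul_I
    rw [e0, e1] at h
    have e2 : ((Real.pi : ℂ) ^ 2 * ((Real.pi / 4 : ℝ) : ℂ) ^ 2 / 8) =
        ((Real.pi ^ 4 / 128 : ℝ) : ℂ) := by push_cast; ring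
    have e3 : (2 * I * (((Real.pi / 4 : ℝ) : ℂ) * E 1 I)).re = 0 := by
      rw [show 2 * I * (((Real.pi / 4 : ℝ) : ℂ) * E 1 I) =
        ((Real.pi / 2 : ℝ) : ℂ) * (E 1 I * I) by push_cast; ring, re_ofReal_mul, mul_I_re, E_one_I_im]
      simp
    simp only [zero_add, E_at_zero, Nat.reduceAdd] at h
    rw [e2] at h
    simp only [sub_re, add_re, e3, ofReal_re] at h
    simp at h
    linarith
  · have hx' : x ∈ Ioc 0 (Real.pi / 4) := ⟨hx.1, hx.2.le⟩
    have hx2 : x < Real.pi / 2 := by linarith [hx.2]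
    have n1 := norm_tan_mul_I hx.1 hx.2
    have hT : (Real.tan x : ℂ) ≠ 0 := by exact_mod_cast (htan0 x hx').ne'
    have hC : (Real.cos x : ℂ) ≠ 0 := by exact_mod_cast (hcos x hx').ne'
    have n0 : (Real.tan x * I : ℂ) ≠ 0 := mul_ne_zero hT I_ne_zero
    have ht := hasDerivAt_ofReal x
    refine (((((ht.fun_mul (hasDerivAt_E_one_circle hx.1 hx2)).const_mul (2 * I)).fun_sub
      (hasDerivAt_E_two_circle x)).fun_add
      (((((ht.fun_mul (hlog x hx')).fun_pow 2).div_const 2).fun_add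
        ((hlog x hx').fun_mul ((htan x hx').E_comp 0 n1 n0))).fun_sub
        ((htan x hx').E_comp 1 n1 n0))).fun_sub
      (((ht.fun_pow 2).const_mul _).div_const 8)).congr_deriv ?_
    rw [E_zero_tan hx.1 hx.2]
    have hI := I_sq
    have hI' := I_ne_zero
    push_cast at hT hC ⊢
    field_simp
    linear_combination 8 * x * Complex.cos x ^ 2 * Complex.tan x *
      (4 * (Real.log (Real.tan x) : ℂ) ^ 2 - 4 * Real.log (Real.tan x) * Real.pi * I
        + (Real.pi : ℂ) ^ 2 * (I ^ 2 - 1)) * hI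

/-- `E_two_I_re` unfolded, with `S 2 I` and `S 2 (-I)` conjugate. -/
lemma S_two_I : (S 2 (-I)).re = (7 / 32) * (S 2 1).re + (5 / 16) * (S 2 (-1)).re
    - Real.pi ^ 4 / 256 := by
  have h := E_two_I_re
  have hc := congrArg re (S_conj 2 I)
  rw [conj_I, conj_re] at hc
  have e1 : E 2 I = ((1 / 2 : ℝ) : ℂ) * (S 2 I + S 2 (-I)) - ((1 / 16 : ℝ) : ℂ) * S 2 (-1) := by
    rw [E, I_sq]; push_cast; ring
  have e2 : E 2 1 = ((1 / 2 : ℝ) : ℂ) * (S 2 1 + S 2 (-1)) - ((1 / 16 : ℝ) : ℂ) * S 2 1 := by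
    rw [E, one_pow]; push_cast; ring
  rw [e1, e2] at h
  simp only [sub_re, re_ofReal_mul, add_re] at h
  linarith

/-! ### The path from `1/2` to `(1 + I)/2` -/

lemma Li_ofReal (n : ℕ) (x : ℝ) : ∃ a : ℝ, Li n x = a := by
  refine ⟨(Li n x).re, (conj_eq_iff_re.1 ?_).symm⟩
  rw [← Li_conj, conj_ofReal]

lemma S_ofReal (n : ℕ) (x : ℝ) : ∃ a : ℝ, S n x = a := by
  refine ⟨(S n x).re, (conj_eq_iff_re.1 ?_).symm⟩
  rw [← S_conj, conj_ofReal]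

lemma norm_path_lt {t : ℝ} (ht : t ∈ Icc 0 (Real.pi / 4)) :
    ‖(1 + Real.tan t * I : ℂ) / 2‖ < 1 := by
  have hpi := Real.pi_pos
  have h1 : |Real.tan t| ≤ 1 := by
    have h0 : 0 ≤ Real.tan t :=
      Real.tan_nonneg_of_nonneg_of_le_pi_div_two ht.1 (by linarith [ht.2])
    rw [abs_of_nonneg h0, ← Real.tan_pi_div_four]
    exact Real.strictMonoOn_tan.monotoneOn ⟨by linarith [ht.1], by linarith [ht.2]⟩
      ⟨by linarith, by linarith⟩ ht.2
  have h2 : ‖(1 + Real.tan t * I : ℂ)‖ ^ 2 = 1 + Real.tan t ^ 2 := by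
    rw [← normSq_eq_norm_sq, show (1 + Real.tan t * I : ℂ) = (1 : ℝ) + Real.tan t * I by simp,
      normSq_add_mul_I]
    ring
  rw [norm_div, norm_ofNat, div_lt_one two_pos]
  nlinarith [sq_abs (Real.tan t), abs_nonneg (Real.tan t),
    norm_nonneg (1 + Real.tan t * I : ℂ)]

lemma log_two_mul_cos {t : ℝ} (h : 0 < Real.cos t) :
    Real.log (2 * Real.cos t) = Real.log 2 + Real.log (Real.cos t) :=
  Real.log_mul two_ne_zero h.ne'

lemma Li_one_path {t : ℝ} (ht : t ∈ Icc 0 (Real.pi / 4)) :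
    Li 1 ((1 + Real.tan t * I) / 2) = Real.log (2 * Real.cos t) + t * I := by
  have hpi := Real.pi_pos
  have ha : |t| < Real.pi / 2 := by rw [abs_of_nonneg ht.1]; linarith [ht.2]
  have hc : 0 < Real.cos t := Real.cos_pos_of_mem_Ioo (abs_lt.1 ha)
  have hne : (1 - Real.tan t * I : ℂ) ≠ 0 := fun h => by
    have := congrArg re h
    rw [sub_re, re_ofReal_mul] at this
    simp at this
  rw [Li_one (norm_path_lt ht),
    show (1 - (1 + Real.tan t * I) / 2 : ℂ) = ((1 / 2 : ℝ) : ℂ) * (1 - Real.tan t * I) by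
      push_cast; ring, log_ofReal_mul (by norm_num) hne, log_one_sub_tan ha, log_two_mul_cos hc,
    log_half]
  push_cast
  ring

/-- The comparison between the path `(1 + I tan t)/2` and the arc `-e^{2it}`, `0 ≤ t ≤ π/4`. With
`w = log (2 cos t)`, `v = w - log 2 / 2` and `τ = π/4 - t`, the functions `S` and `Li` on the arc and
a polynomial in `v`, `τ`, `t` cancel the real part of the derivative of
`Li 4 z - λ Li 3 z + λ² Li 2 z / 2 - λ³ Li 1 z / 6`, where `λ = -v - τ I = log (2 z / (1 + I))`. -/
lemma path_relation :
    (Li 4 ((1 + I) / 2)).re - (S 2 (-I)).re / 4 - Real.log 2 / 4 * (Li 3 (-I)).re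
      + Real.pi ^ 4 / 3072 =
    (Li 4 (1 / 2)).re + Real.log 2 / 2 * (Li 3 (1 / 2)).re
      + (Real.log 2 ^ 2 / 4 - Real.pi ^ 2 / 16) / 2 * (Li 2 (1 / 2)).re
      + Real.log 2 / 6 * ((Real.log 2 / 2) ^ 3 - 3 * (Real.log 2 / 2) * (Real.pi / 4) ^ 2)
      - (S 2 (-1)).re / 4 - Real.log 2 / 4 * (Li 3 (-1)).re
      - Real.log 2 ^ 4 / 384 - Real.log 2 ^ 2 * Real.pi ^ 2 / 256 + Real.pi ^ 4 / 6144 := by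
  have hpi := Real.pi_pos
  have hab : (0 : ℝ) < Real.pi / 4 := by linarith
  set l : ℝ := Real.log 2 with hl
  set W : ℝ → ℝ := fun t => Real.log (2 * Real.cos t) with hW
  set F : ℝ → ℂ := fun t => Li 4 ((1 + Real.tan t * I) / 2)
    + (((W t - l / 2 : ℂ) + (Real.pi / 4 - t) * I) * Li 3 ((1 + Real.tan t * I) / 2)
    + ((W t - l / 2 : ℂ) + (Real.pi / 4 - t) * I) ^ 2 * Li 2 ((1 + Real.tan t * I) / 2) / 2
    + ((W t - l / 2 : ℂ) + (Real.pi / 4 - t) * I) ^ 3 * (W t + t * I) / 6)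
    + (-2 * I * ((Real.pi / 4 - t) * S 1 (exp ((2 * t + Real.pi : ℝ) * I)))
      - S 2 (exp ((2 * t + Real.pi : ℝ) * I))) / 4
    + l / 4 * (-2 * I * ((Real.pi / 4 - t) * Li 2 (exp ((2 * t + Real.pi : ℝ) * I)))
      - Li 3 (exp ((2 * t + Real.pi : ℝ) * I)))
    + (-(W t - l / 2 : ℂ) ^ 4 / 24 + (W t - l / 2 : ℂ) ^ 2 * (Real.pi / 4 - t : ℂ) ^ 2 / 4
      + (Real.pi / 4 - t : ℂ) ^ 4 / 24 - (Real.pi / 4 - t : ℂ) ^ 2 * l ^ 2 / 8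
      + Real.pi * (t : ℂ) ^ 3 / 12 - (t : ℂ) ^ 4 / 4) with hF
  set r : ℝ → ℝ := fun t => -(Real.tan t * (3 * (W t - l / 2) ^ 2 * (Real.pi / 4 - t)
      - (Real.pi / 4 - t) ^ 3) - ((W t - l / 2) ^ 3 - 3 * (W t - l / 2) * (Real.pi / 4 - t) ^ 2)) / 6
    + 2 * (Real.pi / 4 - t) * W t * t - l * (Real.pi / 4 - t) * t with hr
  have hd : ∀ x ∈ Icc 0 (Real.pi / 4), HasDerivAt F (r x * I) x := fun x hx => by
    have hx2 : x < Real.pi / 2 := by linarith [hx.2]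
    have hc : 0 < Real.cos x := Real.cos_pos_of_mem_Ioo ⟨by linarith [hx.1], hx2⟩
    have hsec : 1 / Real.cos x ^ 2 = 1 + Real.tan x ^ 2 := by
      rw [Real.tan_eq_sin_div_cos]
      field_simp
      linarith [Real.sin_sq_add_cos_sq x]
    have htan : HasDerivAt (fun t : ℝ => (1 + Real.tan t * I : ℂ) / 2)
        ((1 + (Real.tan x : ℂ) ^ 2) * I / 2) x := by
      refine ((((Real.hasDerivAt_tan hc.ne').ofReal_comp).mul_const I).const_add 1).div_const 2
        |>.congr_deriv ?_
      rw [hsec]; push_cast; rfl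
    have n1 := norm_path_lt hx
    have n0 : (1 + Real.tan x * I : ℂ) ≠ 0 := fun h => by
      have := congrArg re h
      rw [add_re, re_ofReal_mul] at this
      simp at this
    have n0' : (1 + Real.tan x * I : ℂ) / 2 ≠ 0 := div_ne_zero n0 two_ne_zero
    have hw : HasDerivAt (fun t : ℝ => (W t : ℂ)) (-Real.tan x : ℂ) x := by
      have h1 := ((((Real.hasDerivAt_cos x).const_mul 2).log (by positivity)).ofReal_comp)
      refine h1.congr_deriv ?_
      rw [Real.tan_eq_sin_div_cos]
      have : (Real.cos x : ℂ) ≠ 0 := by exact_mod_cast hc.ne'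
      push_cast at this ⊢
      field_simp
    have hv := hw.sub_const (l / 2 : ℂ)
    have ht := hasDerivAt_ofReal x
    have hτ := ht.const_sub (Real.pi / 4 : ℂ)
    have hlam := hv.fun_add (hτ.mul_const I)
    have hθ : HasDerivAt (fun t : ℝ => 2 * t + Real.pi) 2 x := by
      simpa using ((hasDerivAt_id' x).const_mul 2).add_const Real.pi
    have hθ0 : 0 < 2 * x + Real.pi := by linarith [hx.1]
    have hθ1 : 2 * x + Real.pi < 2 * Real.pi := by linarith
    have e1 : Real.sin ((2 * x + Real.pi) / 2) = Real.cos x := by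
      rw [show (2 * x + Real.pi) / 2 = x + Real.pi / 2 by ring, Real.sin_add_pi_div_two]
    have e2 : (2 * x + Real.pi - Real.pi) / 2 = x := by ring
    have hS1 := hasDerivAt_S_one_circle hθ hθ0 hθ1
    have hL2 := hasDerivAt_Li_two_circle hθ hθ0 hθ1
    rw [e1, e2] at hS1 hL2
    have hS2 := hasDerivAt_S_two_circle hθ
    have hL3 := hasDerivAt_Li_three_circle hθ
    refine ((((htan.Li_comp 3 n1 n0').fun_add
      (((hlam.fun_mul (htan.Li_comp 2 n1 n0')).fun_add
        (((hlam.fun_pow 2).fun_mul (htan.Li_comp 1 n1 n0')).div_const 2)).fun_add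
        (((hlam.fun_pow 3).fun_mul (hw.fun_add (ht.mul_const I))).div_const 6))).fun_add
      ((((hτ.fun_mul hS1).const_mul (-2 * I)).fun_sub hS2).div_const 4)).fun_add
      ((((hτ.fun_mul hL2).const_mul (-2 * I)).fun_sub hL3).const_mul (l / 4 : ℂ))).fun_add
      (((((((hv.fun_pow 4).fun_neg.div_const 24).fun_add
        (((hv.fun_pow 2).fun_mul (hτ.fun_pow 2)).div_const 4)).fun_add
        ((hτ.fun_pow 4).div_const 24)).fun_sub (((hτ.fun_pow 2).mul_const _).div_const 8)).fun_add
        (((ht.fun_pow 3).const_mul _).div_const 12)).fun_sub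
        ((ht.fun_pow 4).div_const 4)) |>.congr_deriv ?_
    rw [Li_one_path hx]
    have e3 : ∀ a : ℂ, a / ((1 + Real.tan x * I) / 2) * ((1 + (Real.tan x : ℂ) ^ 2) * I / 2) =
        a * (Real.tan x + I) := fun a => by
      field_simp
      linear_combination (-a * (Real.tan x : ℂ)) * I_sq
    simp only [e3, hr]
    generalize Real.tan x = T
    generalize Li 3 ((1 + T * I) / 2) = A3
    generalize Li 2 ((1 + T * I) / 2) = A2
    generalize S 1 (exp ((2 * x + Real.pi : ℝ) * I)) = B1
    generalize Li 2 (exp ((2 * x + Real.pi : ℝ) * I)) = B2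
    rw [show Real.log (2 * Real.cos x) = W x from rfl]
    generalize W x = w
    push_cast
    linear_combination (((w - l / 2) * (Real.pi / 4 - x) ^ 2 * (I - T) / 2
      + (w - l / 2 : ℂ) ^ 2 * (Real.pi / 4 - x) / 2
      + (Real.pi / 4 - x : ℂ) ^ 3 * (I ^ 2 - 1 - T * I) / 6)
      - (Real.pi / 4 - x) * ((w : ℂ) ^ 2 + 2 * w * x * I + (x : ℂ) ^ 2 * (I ^ 2 - 1))
      + l * (Real.pi / 4 - x) * (w + x * I)) * I_sq
  have hc : ∀ x ∈ Icc 0 (Real.pi / 4), Tendsto F (𝓝 x) (𝓝 (F x)) := fun x hx =>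
    (hd x hx).continuousAt.tendsto
  have h := re_eq_of_hasDerivAt hab (F := F) (F' := fun x => r x * I)
    (fun x hx => hd x (Ioo_subset_Icc_self hx))
    (fun x hx => by rw [re_ofReal_mul, I_re, mul_zero])
    ((hc 0 ⟨le_rfl, hab.le⟩).mono_left nhdsWithin_le_nhds)
    ((hc _ ⟨hab.le, le_rfl⟩).mono_left nhdsWithin_le_nhds)
  have w0 : W 0 = l := by simp [hW, hl]
  have w1 : W (Real.pi / 4) = l / 2 := by
    simp only [hW, Real.cos_pi_div_four]
    rw [mul_div_cancel₀ _ two_ne_zero, Real.log_sqrt two_pos.le]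
  have b0 : exp ((2 * 0 + Real.pi : ℝ) * I) = -1 := by simp
  have b1 : exp ((2 * (Real.pi / 4) + Real.pi : ℝ) * I) = -I := by
    rw [exp_add_pi, show 2 * (Real.pi / 4) = Real.pi / 2 by ring]
    push_cast
    rw [exp_pi_div_two_mul_I]
  obtain ⟨a4, h4⟩ := Li_ofReal 4 (1 / 2)
  obtain ⟨a3, h3⟩ := Li_ofReal 3 (1 / 2)
  obtain ⟨a2, h2⟩ := Li_ofReal 2 (1 / 2)
  obtain ⟨c2, hc2⟩ := Li_ofReal 2 (-1)
  obtain ⟨c3, hc3⟩ := Li_ofReal 3 (-1)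
  obtain ⟨s1, hs1⟩ := S_ofReal 1 (-1)
  obtain ⟨s2, hs2⟩ := S_ofReal 2 (-1)
  push_cast at h4 h3 h2 hc2 hc3 hs1 hs2
  have F1 : F (Real.pi / 4) = Li 4 ((1 + I) / 2) - ((1 / 4 : ℝ) : ℂ) * S 2 (-I)
      - ((l / 4 : ℝ) : ℂ) * Li 3 (-I) + ((Real.pi ^ 4 / 3072 : ℝ) : ℂ) := by
    simp only [hF]
    rw [w1, b1, Real.tan_pi_div_four]
    push_cast
    rw [one_mul]
    ring
  have F0 : F 0 = ((a4 + l / 2 * a3 + (l ^ 2 / 4 - Real.pi ^ 2 / 16) / 2 * a2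
      + l / 6 * ((l / 2) ^ 3 - 3 * (l / 2) * (Real.pi / 4) ^ 2) - s2 / 4 - l / 4 * c3
      - l ^ 4 / 384 - l ^ 2 * Real.pi ^ 2 / 256 + Real.pi ^ 4 / 6144 : ℝ) : ℂ)
      + ((Real.pi / 4 * a3 + l * Real.pi / 8 * a2
        + l / 6 * (3 * (l / 2) ^ 2 * (Real.pi / 4) - (Real.pi / 4) ^ 3)
        - Real.pi / 8 * s1 - l * Real.pi / 8 * c2 : ℝ) : ℂ) * I := by
    simp only [hF]
    rw [w0, b0, Real.tan_zero]
    push_cast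
    simp only [zero_mul, add_zero]
    rw [h4, h3, h2, hc2, hc3, hs1, hs2]
    linear_combination ((Real.pi : ℂ) ^ 2 / 32 * a2
      + (l : ℂ) / 6 * (3 * (l / 2) * (Real.pi / 4) ^ 2 + (Real.pi / 4 : ℂ) ^ 3 * I)) * I_sq
  rw [F0, F1] at h
  simp only [add_re, sub_re, re_ofReal_mul, ofReal_re, I_re, mul_zero, add_zero] at h
  rw [h4, h3, h2, hc3, hs2]
  simp only [ofReal_re]
  linarith

/-! ### The ladder -/

theorem li4_ladder :
    8 * (Li 4 ((1 + I) / 2)).re - (5 / 2) * (Li 4 (1 / 2)).re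
      - Real.log 2 ^ 4 / 12 + 5 * Real.pi ^ 2 * Real.log 2 ^ 2 / 96 =
      343 * Real.pi ^ 4 / 11520 := by
  have h1 := path_relation
  have h2 := S_two_I
  rw [Li_three_neg_I_re] at h1
  obtain ⟨a4, h4⟩ := Li_ofReal 4 (1 / 2)
  obtain ⟨c, hc⟩ := Li_ofReal 3 1
  push_cast at h4 hc
  have e2 : Li 2 (1 / 2) = ((Real.pi ^ 2 / 12 - Real.log 2 ^ 2 / 2 : ℝ) : ℂ) := by
    rw [Li_two_half]; push_cast; ring
  have e3 : Li 3 (1 / 2) =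
      ((7 / 8 * c - Real.pi ^ 2 * Real.log 2 / 12 + Real.log 2 ^ 3 / 6 : ℝ) : ℂ) := by
    rw [Li_three_half, hc]; push_cast; ring
  have e3' : Li 3 (-1) = ((-(3 / 4) * c : ℝ) : ℂ) := by
    rw [Li_three_neg_one, hc]; push_cast; ring
  have s1 : S 2 1 = ((Real.pi ^ 4 / 180 : ℝ) : ℂ) := by
    rw [S_two_one]; push_cast; ring
  have s2 : S 2 (-1) = ((4 * a4 + 4 * Real.log 2 * (7 / 8 * c - Real.pi ^ 2 * Real.log 2 / 12
      + Real.log 2 ^ 3 / 6) + 2 * Real.log 2 ^ 2 * (Real.pi ^ 2 / 12 - Real.log 2 ^ 2 / 2)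
      + Real.log 2 ^ 4 / 2 + Real.pi ^ 4 / 360 - 4 * (Real.pi ^ 4 / 90) : ℝ) : ℂ) := by
    rw [S_two_neg_one, h4, e3, e2, s1, Li_four_one]; push_cast; ring
  rw [s1, s2] at h2
  rw [h4, e3, e2, s2, e3', hc] at h1
  rw [h4]
  simp only [ofReal_re] at h1 h2 ⊢
  linear_combination 8 * h1 + 2 * h2
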